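/- For all reals 1 < a < b, the limit as R → ∞ of μ1{ α ∈ (0,1) irrational : a < q_{n_R(α)}(α)/R < b } exists and equals (∫_D φ dμ2)^{−1} · ∫_D ( max(0, φ(x,y) − ln a) − max(0, φ(x,y) − ln b) ) dμ2(x,y). -/

import Mathlib

open MeasureTheory Filter Set Topology

noncomputable section

/-- The Gauss map `x ↦ {1/x}`. -/
def gaussMap (x : ℝ) : ℝ := Int.fract (1 / x)

/-- The `n`-th partial quotient (1-indexed) of the continued fraction expansion of `α`:
`pq α n = ⌊1 / 𝒢^{n-1} α⌋`. -/
def pq (α : ℝ) (n : ℕ) : ℕ := ⌊1 / gaussMap^[n - 1] α⌋₊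

/-- Denominators of the convergents attached to a (1-indexed) sequence of partial quotients:
`q 0 = 1`, `q 1 = b 1`, `q (n+2) = b (n+2) * q (n+1) + q n`. -/
def qden (b : ℕ → ℕ) : ℕ → ℕ
  | 0 => 1
  | 1 => b 1
  | n + 2 => b (n + 2) * qden b (n + 1) + qden b n

/-- Numerators of the convergents attached to a (1-indexed) sequence of partial quotients:
`p 0 = 0`, `p 1 = 1`, `p (n+2) = b (n+2) * p (n+1) + p n`. -/
def pnum (b : ℕ → ℕ) : ℕ → ℕ
  | 0 => 0
  | 1 => 1
  | n + 2 => b (n + 2) * pnum b (n + 1) + pnum b n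

/-- `n_R(α)`: the first index `n` with `q_n(α) > R`. -/
def nIndex (α : ℝ) (R : ℝ) : ℕ := sInf {n : ℕ | R < (qden (pq α) n : ℝ)}

/-- The Gauss measure on `(0,1)`, with density `1 / (ln 2 · (1 + x))`. -/
def gaussMeasure : Measure ℝ :=
  (volume.restrict (Ioo (0 : ℝ) 1)).withDensity fun x =>
    ENNReal.ofReal (1 / (Real.log 2 * (1 + x)))

/-- The domain `D = ((0,1) ∖ ℚ) × ((0,1) ∖ ℚ)` of the natural extension of the Gauss map. -/
def Dset : Set (ℝ × ℝ) :=
  {p | p.1 ∈ Ioo (0 : ℝ) 1 ∧ Irrational p.1 ∧ p.2 ∈ Ioo (0 : ℝ) 1 ∧ Irrational p.2}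

/-- The invariant measure `μ₂` on `D`, with density `1 / (ln 2 · (1 + x y)²)`. -/
def mu2 : Measure (ℝ × ℝ) :=
  (volume.restrict Dset).withDensity fun p =>
    ENNReal.ofReal (1 / (Real.log 2 * (1 + p.1 * p.2) ^ 2))

/-- The roof function `φ(x, y) = ln (⌊1/y⌋ + x)`. -/
def roof (p : ℝ × ℝ) : ℝ := Real.log ((⌊1 / p.2⌋ : ℝ) + p.1)

/-- The natural extension of the Gauss map,
`Ĝ(x, y) = (1 / (⌊1/y⌋ + x), 1/y − ⌊1/y⌋)`. -/
def GhatMap (p : ℝ × ℝ) : ℝ × ℝ := (1 / ((⌊1 / p.2⌋ : ℝ) + p.1), Int.fract (1 / p.2))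

/-- Birkhoff sums `S_r φ(p) = ∑_{i<r} φ(Ĝ^i p)` of the roof function under `Ĝ`. -/
def birk (p : ℝ × ℝ) (r : ℕ) : ℝ := ∑ i ∈ Finset.range r, roof (GhatMap^[i] p)

/-- `r(p, T)`: the first `r` with `S_r φ(p) > T`. -/
def rTime (p : ℝ × ℝ) (T : ℝ) : ℕ := sInf {r : ℕ | T < birk p r}

/-- Value of a finite continued fraction `[b₁, b₂, …, bₘ] = 1/(b₁ + 1/(b₂ + ⋯ + 1/bₘ))`,
entries given as a list. -/
def cfList : List ℝ → ℝ
  | [] => 0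
  | b :: t => 1 / (b + cfList t)

/-- The `m`-th truncation `[b 1, b 2, …, b m]` of an infinite continued fraction. -/
def cfTrunc (b : ℕ → ℝ) (m : ℕ) : ℝ := cfList ((List.range m).map fun i => b (i + 1))

/-- Value of the infinite continued fraction `[b 1, b 2, …]`, i.e. the limit of its finite
truncations. -/
def cfVal (b : ℕ → ℝ) : ℝ := limUnder atTop fun m => cfTrunc b m

/-- The finite continued fraction on the reversed word,
`cfRev b k = [b k; b (k-1), …, b 1] = b k + 1/(b (k-1) + ⋯ + 1/(b 1))`. -/
def cfRev (b : ℕ → ℝ) (k : ℕ) : ℝ :=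
  b k + cfList ((List.range (k - 1)).map fun i => b (k - 1 - i))

/-- For a bi-infinite sequence `a : ℤ → ℕ` of partial quotients,
`fn a n = ln q_n − ∑_{k=1}^n ln [a_k; a_{k-1}, a_{k-2}, …]`. -/
def fn (a : ℤ → ℕ) (n : ℕ) : ℝ :=
  Real.log (qden (fun k => a (k : ℤ)) n : ℝ) -
    ∑ k ∈ Finset.Icc 1 n,
      Real.log ((a (k : ℤ) : ℝ) + cfVal fun j => (a ((k : ℤ) - (j : ℤ)) : ℝ))

/-- The bi-sided cylinder of length `n` in `D` prescribing the sequence coordinates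
`a_k = b k` for `−n ≤ k ≤ n` (where `a_k`, `k ≥ 1`, are the partial quotients of the second
coordinate and `a_{−j}`, `j ≥ 0`, are the partial quotients of the first coordinate). -/
def cylinder (n : ℕ) (b : ℤ → ℕ) : Set (ℝ × ℝ) :=
  {p ∈ Dset | (∀ k : ℕ, 1 ≤ k → k ≤ n → pq p.2 k = b (k : ℤ)) ∧
    ∀ j : ℕ, j ≤ n → pq p.1 (j + 1) = b (-(j : ℤ))}

/-- The phase space of the special flow over `Ĝ` with roof function `φ`. -/
def DPhi : Set ((ℝ × ℝ) × ℝ) := {q | q.1 ∈ Dset ∧ 0 ≤ q.2 ∧ q.2 < roof q.1}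

/-- The invariant probability measure `μ₃` of the special flow. -/
def mu3 : Measure ((ℝ × ℝ) × ℝ) :=
  (ENNReal.ofReal (∫ p, roof p ∂mu2))⁻¹ • ((mu2.prod volume).restrict DPhi)

/-- The special flow `Φ_t` (for `t ≥ 0`) built over `Ĝ` with roof function `φ`:
`Φ_t(p, s) = (Ĝ^{r-1} p, s + t − S_{r-1} φ(p))` where `r = r(p, s + t)`. -/
def flowMap (t : ℝ) (q : (ℝ × ℝ) × ℝ) : (ℝ × ℝ) × ℝ :=
  (GhatMap^[rTime q.1 (q.2 + t) - 1] q.1,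
    q.2 + t - birk q.1 (rTime q.1 (q.2 + t) - 1))

end


namespace Kl

lemma card_divisors_pow_four_le (n : ℕ) (hn : n ≠ 0) :
    (n.divisors.card) ^ 4 ≤ 41 ^ 16 * n := by
  have hk : ∀ k : ℕ, (k + 1) ^ 4 ≤ 41 * 2 ^ k := by
    intro k
    rcases lt_or_ge k 8 with h | h
    · interval_cases k <;> norm_num
    · induction k, h using Nat.le_induction with
      | base => norm_num
      | succ k hk ih =>
        have : (k + 1 + 1) ^ 4 ≤ 2 * (k + 1) ^ 4 := by
          obtain ⟨m, rfl⟩ := Nat.exists_eq_add_of_le hk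
          ring_nf
          nlinarith [Nat.zero_le m, Nat.zero_le (m^2), Nat.zero_le (m^3), Nat.zero_le (m^4)]
        calc (k + 1 + 1) ^ 4 ≤ 2 * (k + 1) ^ 4 := this
          _ ≤ 2 * (41 * 2 ^ k) := by omega
          _ = _ := by ring
  have hk16 : ∀ k : ℕ, (k + 1) ^ 4 ≤ 16 ^ k := by
    intro k
    induction k with
    | zero => norm_num
    | succ k ih =>
      have : (k + 1 + 1) ^ 4 ≤ 16 * (k + 1) ^ 4 := by
        have h2 : k + 1 + 1 ≤ 2 * (k + 1) := by omega
        calc (k + 1 + 1) ^ 4 ≤ (2 * (k + 1)) ^ 4 := Nat.pow_le_pow_left h2 4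
          _ = _ := by ring
      calc (k + 1 + 1) ^ 4 ≤ 16 * (k + 1) ^ 4 := this
          _ ≤ 16 * (16 ^ k) := by omega
          _ = _ := by ring
  rw [Nat.card_divisors hn, ← Finset.prod_pow]
  have h1 : ∏ x ∈ n.primeFactors, (n.factorization x + 1) ^ 4 ≤
      ∏ x ∈ n.primeFactors, ((if x < 16 then 41 else 1) * x ^ n.factorization x) := by
    apply Finset.prod_le_prod'
    intro p hp
    have hpp := Nat.prime_of_mem_primeFactors hp
    split_ifs with h
    · exact (hk _).trans (Nat.mul_le_mul_left _ (Nat.pow_le_pow_left hpp.two_le _))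
    · rw [one_mul]
      exact (hk16 _).trans (Nat.pow_le_pow_left (by omega) _)
  refine h1.trans ?_
  rw [Finset.prod_mul_distrib]
  have h2 : ∏ x ∈ n.primeFactors, x ^ n.factorization x = n := by
    conv_rhs => rw [← Nat.prod_factorization_pow_eq_self hn]
    rfl
  rw [h2]
  apply Nat.mul_le_mul_right
  rw [Finset.prod_ite, Finset.prod_const, Finset.prod_const_one, mul_one]
  apply Nat.pow_le_pow_right (by norm_num)
  calc _ ≤ (Finset.range 16).card := by
        apply Finset.card_le_card
        intro x hx
        simp at hx ⊢
        exact hx.2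
    _ = 16 := by simp

lemma le_totient_mul_card_divisors (n : ℕ) : n ≤ n.totient * n.divisors.card := by
  rcases Nat.eq_zero_or_pos n with rfl | hn
  · simp
  calc n = ∑ d ∈ n.divisors, d.totient := (Nat.sum_totient n).symm
    _ ≤ ∑ d ∈ n.divisors, n.totient := by
        apply Finset.sum_le_sum
        intro d hd
        exact Nat.le_of_dvd (Nat.totient_pos.2 hn)
          (Nat.totient_dvd_of_dvd (Nat.dvd_of_mem_divisors hd))
    _ = _ := by rw [Finset.sum_const, smul_eq_mul, mul_comm]

lemma sum_gcd_le (n : ℕ) [NeZero n] :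
    ∑ v : ZMod n, Nat.gcd v.val n ≤ n * n.divisors.card := by
  have hn : n ≠ 0 := NeZero.ne n
  have h0 : ∑ v : ZMod n, Nat.gcd v.val n = ∑ i ∈ Finset.range n, Nat.gcd i n := by
    apply Finset.sum_bij (fun v _ => v.val)
    · intro v _; simp [ZMod.val_lt]
    · intro a _ b _ h; exact ZMod.val_injective n h
    · intro b hb
      exact ⟨(b : ZMod n), Finset.mem_univ _, ZMod.val_cast_of_lt (by simpa using hb)⟩
    · intro a _; rfl
  rw [h0]
  have h1 : ∀ i ∈ Finset.range n, Nat.gcd i n ≤ ∑ d ∈ n.divisors, if d ∣ i then d else 0 := by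
    intro i _
    have hm : Nat.gcd i n ∈ n.divisors := by simp [hn, Nat.gcd_dvd_right]
    refine le_trans ?_ (Finset.single_le_sum (f := fun d => if d ∣ i then d else 0)
      (fun _ _ => Nat.zero_le _) hm)
    simp [Nat.gcd_dvd_left]
  refine (Finset.sum_le_sum h1).trans ?_
  rw [Finset.sum_comm, mul_comm, ← smul_eq_mul, ← Finset.sum_const]
  apply Finset.sum_le_sum
  intro d hd
  obtain ⟨c, hc⟩ := Nat.dvd_of_mem_divisors hd
  have hd0 : 0 < d := Nat.pos_of_mem_divisors hd
  rw [← Finset.sum_filter, Finset.sum_const, smul_eq_mul]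
  have : (Finset.filter (fun i => d ∣ i) (Finset.range n)).card ≤ c := by
    calc _ ≤ ((Finset.range c).image (fun j => d * j)).card := by
          apply Finset.card_le_card
          intro i hi
          simp only [Finset.mem_filter, Finset.mem_range] at hi
          obtain ⟨hi, j, rfl⟩ := hi
          simp only [Finset.mem_image, Finset.mem_range]
          refine ⟨j, ?_, rfl⟩
          rw [hc] at hi
          exact Nat.lt_of_mul_lt_mul_left hi
      _ ≤ _ := Finset.card_image_le.trans (by simp)
  calc _ ≤ c * d := Nat.mul_le_mul_right _ this
    _ = n := by rw [hc, mul_comm]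

lemma card_mul_eq_le (n : ℕ) [NeZero n] (c s y : ZMod n) (m : ℕ) (hm : 0 < m)
    (h : (m : ZMod n) = s * c) :
    (Finset.univ.filter (fun x : ZMod n => c * x = y)).card ≤ m := by
  rcases (Finset.univ.filter (fun x : ZMod n => c * x = y)).eq_empty_or_nonempty with h0 | ⟨x0, hx0⟩
  · simp [h0]
  refine le_trans ?_ (IsAddCyclic.card_nsmul_eq_zero_le (α := ZMod n) hm)
  apply Finset.card_le_card_of_injOn (fun x => x - x0)
  · intro x hx
    simp at hx hx0 ⊢
    have : c * (x - x0) = 0 := by rw [mul_sub, hx, hx0, sub_self]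
    rw [h, mul_assoc, this, mul_zero]
  · intro a _ b _ hab
    simpa using hab

lemma exists_gcd_eq (n : ℕ) [NeZero n] (v : ZMod n) :
    ∃ s : ZMod n, ((Nat.gcd v.val n : ℕ) : ZMod n) = s * v := by
  have h := Nat.gcd_eq_gcd_ab v.val n
  have h2 := congrArg (Int.cast : ℤ → ZMod n) h
  push_cast at h2
  refine ⟨(Nat.gcdA v.val n : ZMod n), ?_⟩
  rw [h2]
  simp [mul_comm]

/-- number of solutions in the fourth moment. -/
lemma card_sol_le (n : ℕ) [NeZero n] :
    (Finset.univ.filter (fun p : ((ZMod n)ˣ × (ZMod n)ˣ) × ((ZMod n)ˣ × (ZMod n)ˣ) =>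
      ((p.1.1 : ZMod n) + p.1.2 = p.2.1 + p.2.2) ∧
      (((p.1.1⁻¹ : (ZMod n)ˣ) : ZMod n) + ((p.1.2⁻¹ : (ZMod n)ˣ) : ZMod n) =
        ((p.2.1⁻¹ : (ZMod n)ˣ) : ZMod n) + ((p.2.2⁻¹ : (ZMod n)ˣ) : ZMod n)))).card
      ≤ 2 * (n * n.divisors.card) ^ 2 := by
  have key : ∀ x1 x2 x3 x4 : (ZMod n)ˣ, ((x1 : ZMod n) + x2 = x3 + x4) →
      ((x1⁻¹ : (ZMod n)ˣ) : ZMod n) + ((x2⁻¹ : (ZMod n)ˣ) : ZMod n) =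
        ((x3⁻¹ : (ZMod n)ˣ) : ZMod n) + ((x4⁻¹ : (ZMod n)ˣ) : ZMod n) →
      (2 * ((x1 : ZMod n) - x3) * (x1 - x4)) * x1 =
        (x1 - x3) * (x1 - x4) * ((x1 - x3) + (x1 - x4)) := by
    intro x1 x2 x3 x4 h1 h2
    have e1 := x1.mul_inv
    have e2 := x2.mul_inv
    have e3 := x3.mul_inv
    have e4 := x4.mul_inv
    set y1 := ((x1⁻¹ : (ZMod n)ˣ) : ZMod n)
    set y2 := ((x2⁻¹ : (ZMod n)ˣ) : ZMod n)
    set y3 := ((x3⁻¹ : (ZMod n)ˣ) : ZMod n)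
    set y4 := ((x4⁻¹ : (ZMod n)ˣ) : ZMod n)
    have h3 : ((x1 : ZMod n) + x2) * (x3 * x4) = (x3 + x4) * (x1 * x2) := by
      have a1 : (x1 : ZMod n) + x2 = (y1 + y2) * (x1 * x2) := by
        linear_combination (-x2 : ZMod n) * e1 - x1 * e2
      have a2 : (x3 : ZMod n) + x4 = (y3 + y4) * (x3 * x4) := by
        linear_combination (-x4 : ZMod n) * e3 - x3 * e4
      rw [a1, a2, h2]; ring
    have hx2 : (x2 : ZMod n) = x3 + x4 - x1 := by linear_combination h1
    rw [hx2] at h3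
    linear_combination h3
  calc _ ≤ (((Finset.univ : Finset (ZMod n × ZMod n)).sigma (fun vw =>
        Finset.univ.filter (fun x : ZMod n => (2 * vw.1 * vw.2) * x = vw.1 * vw.2 * (vw.1 + vw.2))))).card := by
        apply Finset.card_le_card_of_injOn
          (fun p => ⟨((p.1.1 : ZMod n) - p.2.1, (p.1.1 : ZMod n) - p.2.2), (p.1.1 : ZMod n)⟩)
        · intro p hp
          simp at hp ⊢
          exact key _ _ _ _ hp.1 hp.2
        · rintro ⟨⟨a1, a2⟩, a3, a4⟩ ha ⟨⟨b1, b2⟩, b3, b4⟩ hb hab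
          simp at ha hb hab
          obtain ⟨⟨h1, h2⟩, h3⟩ := hab
          have h3' : a1 = b1 := Units.ext h3
          subst h3'
          have h1' : a3 = b3 := Units.ext (by linear_combination -h1)
          have h2' : a4 = b4 := Units.ext (by linear_combination -h2)
          subst h1' h2'
          have : a2 = b2 := Units.ext (by linear_combination ha.1 - hb.1)
          rw [this]
    _ = ∑ vw : ZMod n × ZMod n, (Finset.univ.filter (fun x : ZMod n => (2 * vw.1 * vw.2) * x = vw.1 * vw.2 * (vw.1 + vw.2))).card := Finset.card_sigma _ _
    _ ≤ ∑ vw : ZMod n × ZMod n, 2 * (Nat.gcd vw.1.val n * Nat.gcd vw.2.val n) := by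
        apply Finset.sum_le_sum
        rintro ⟨v, w⟩ _
        obtain ⟨s, hs⟩ := exists_gcd_eq n v
        obtain ⟨t, ht⟩ := exists_gcd_eq n w
        have hn : 0 < n := Nat.pos_of_ne_zero (NeZero.ne n)
        apply card_mul_eq_le n _ (s * t)
        · have := Nat.gcd_pos_of_pos_right v.val hn
          have := Nat.gcd_pos_of_pos_right w.val hn
          positivity
        · push_cast
          rw [hs, ht]; ring
    _ = 2 * (∑ v : ZMod n, Nat.gcd v.val n) ^ 2 := by
        rw [← Finset.mul_sum, Fintype.sum_prod_type, sq, Finset.sum_mul_sum]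
    _ ≤ _ := by
        gcongr
        exact sum_gcd_le n

end Kl


namespace Kl

/-- Kloosterman sum. -/
noncomputable def K (n : ℕ) [NeZero n] (h k : ZMod n) : ℂ :=
  ∑ u : (ZMod n)ˣ, ZMod.stdAddChar (h * (u : ZMod n) + k * ((u⁻¹ : (ZMod n)ˣ) : ZMod n))

lemma norm_std (n : ℕ) [NeZero n] (x : ZMod n) : ‖(ZMod.stdAddChar x : ℂ)‖ = 1 := by
  rw [ZMod.stdAddChar_apply]; exact Circle.norm_coe _

lemma sum_std (n : ℕ) [NeZero n] (x : ZMod n) :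
    ∑ a : ZMod n, (ZMod.stdAddChar (a * x) : ℂ) = if x = 0 then (n : ℂ) else 0 := by
  have := AddChar.sum_mulShift (R' := ℂ) x (ZMod.isPrimitive_stdAddChar n)
  rw [this]
  simp [ZMod.card]

lemma parseval (n : ℕ) [NeZero n] {P : Type*} [Fintype P] (f g : P → ZMod n) :
    ∑ a : ZMod n, ∑ b : ZMod n, ‖∑ p, (ZMod.stdAddChar (a * f p + b * g p) : ℂ)‖ ^ 2 =
      (n : ℝ) ^ 2 * (Finset.univ.filter (fun p : P × P => f p.1 = f p.2 ∧ g p.1 = g p.2)).card := by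
  have h : ∀ a b : ZMod n, ((‖∑ p, (ZMod.stdAddChar (a * f p + b * g p) : ℂ)‖ ^ 2 : ℝ) : ℂ) =
      ∑ p : P × P, (ZMod.stdAddChar (a * (f p.1 - f p.2)) : ℂ) * ZMod.stdAddChar (b * (g p.1 - g p.2)) := by
    intro a b
    rw [Complex.ofReal_pow, ← Complex.mul_conj', map_sum, Finset.sum_mul_sum, Fintype.sum_prod_type]
    refine Finset.sum_congr rfl fun p _ => Finset.sum_congr rfl fun q _ => ?_
    rw [← AddChar.map_neg_eq_conj, ← AddChar.map_add_eq_mul, ← AddChar.map_add_eq_mul]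
    congr 1; ring
  have : ((∑ a : ZMod n, ∑ b : ZMod n, ‖∑ p, (ZMod.stdAddChar (a * f p + b * g p) : ℂ)‖ ^ 2 : ℝ) : ℂ) =
      (((n : ℝ) ^ 2 * (Finset.univ.filter (fun p : P × P => f p.1 = f p.2 ∧ g p.1 = g p.2)).card : ℝ) : ℂ) := by
    rw [Complex.ofReal_sum]
    simp_rw [Complex.ofReal_sum, h]
    simp_rw [Finset.sum_comm (γ := ZMod n) (s := Finset.univ) (t := (Finset.univ : Finset (P × P)))]
    simp_rw [← Finset.mul_sum, sum_std, ← Finset.sum_mul, sum_std]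
    rw [Finset.card_filter]
    push_cast
    rw [Finset.mul_sum]
    refine Finset.sum_congr rfl fun p _ => ?_
    simp only [sub_eq_zero]
    split_ifs <;> simp_all [sq]
  exact_mod_cast this

lemma K_fourth_moment (n : ℕ) [NeZero n] :
    ∑ a : ZMod n, ∑ b : ZMod n, ‖K n a b‖ ^ 4 ≤ (n : ℝ) ^ 2 * (2 * (n * n.divisors.card) ^ 2) := by
  have h : ∀ a b : ZMod n, ‖K n a b‖ ^ 4 = ‖∑ p : (ZMod n)ˣ × (ZMod n)ˣ, (ZMod.stdAddChar
      (a * ((p.1 : ZMod n) + (p.2 : ZMod n)) + b * (((p.1⁻¹ : (ZMod n)ˣ) : ZMod n) + ((p.2⁻¹ : (ZMod n)ˣ) : ZMod n))) : ℂ)‖ ^ 2 := by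
    intro a b
    rw [show 4 = 2 * 2 from rfl, pow_mul, ← norm_pow]
    congr 2
    rw [K, sq, Finset.sum_mul_sum, Fintype.sum_prod_type]
    refine Finset.sum_congr rfl fun p _ => Finset.sum_congr rfl fun q _ => ?_
    rw [← AddChar.map_add_eq_mul]
    congr 1; ring
  simp_rw [h]
  rw [parseval]
  gcongr
  exact_mod_cast card_sol_le n

lemma K_bound (n : ℕ) [NeZero n] (h : ZMod n) (k : ℤ) (hk : k ≠ 0) :
    (n.totient : ℝ) * ‖K n h (k : ZMod n)‖ ^ 4 ≤ k.natAbs * ((n : ℝ) ^ 2 * (2 * (n * n.divisors.card) ^ 2)) := by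
  have inv : ∀ u : (ZMod n)ˣ, K n h k = K n (h * u) (k * ((u⁻¹ : (ZMod n)ˣ) : ZMod n)) := by
    intro u
    unfold K
    rw [← Equiv.sum_comp (Equiv.mulLeft u)]
    refine Finset.sum_congr rfl fun x _ => ?_
    congr 1
    simp only [Equiv.coe_mulLeft, mul_inv, Units.val_mul]
    ring
  calc (n.totient : ℝ) * ‖K n h (k : ZMod n)‖ ^ 4
      = ∑ u : (ZMod n)ˣ, ‖K n (h * u) (k * ((u⁻¹ : (ZMod n)ˣ) : ZMod n))‖ ^ 4 := by
        simp_rw [← inv]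
        rw [Finset.sum_const, Finset.card_univ, ZMod.card_units_eq_totient, nsmul_eq_mul]
    _ ≤ ∑ u : (ZMod n)ˣ, ∑ a : ZMod n, ‖K n a (k * ((u⁻¹ : (ZMod n)ˣ) : ZMod n))‖ ^ 4 := by
        apply Finset.sum_le_sum
        intro u _
        exact Finset.single_le_sum (f := fun a => ‖K n a (k * ((u⁻¹ : (ZMod n)ˣ) : ZMod n))‖ ^ 4)
          (fun _ _ => by positivity) (Finset.mem_univ _)
    _ = ∑ u : (ZMod n)ˣ, ∑ a : ZMod n, ‖K n a (k * (u : ZMod n))‖ ^ 4 :=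
        Equiv.sum_comp (Equiv.inv (ZMod n)ˣ) (fun u : (ZMod n)ˣ => ∑ a : ZMod n, ‖K n a (k * (u : ZMod n))‖ ^ 4)
    _ = ∑ b : ZMod n, ∑ u ∈ Finset.univ.filter (fun u : (ZMod n)ˣ => (k : ZMod n) * (u : ZMod n) = b), ∑ a : ZMod n, ‖K n a (k * (u : ZMod n))‖ ^ 4 := by
        rw [Finset.sum_fiberwise]
    _ ≤ ∑ b : ZMod n, k.natAbs * ∑ a : ZMod n, ‖K n a b‖ ^ 4 := by
        apply Finset.sum_le_sum
        intro b _
        rw [Finset.sum_congr rfl (g := fun _ => ∑ a : ZMod n, ‖K n a b‖ ^ 4)]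
        · rw [Finset.sum_const, nsmul_eq_mul]
          gcongr
          refine le_trans ?_ (card_mul_eq_le n (k : ZMod n) (k.sign) b k.natAbs (by omega) ?_)
          · apply Finset.card_le_card_of_injOn (fun u : (ZMod n)ˣ => (u : ZMod n))
            · intro u hu; simpa using hu
            · intro u _ v _ huv; exact Units.ext huv
          · have : ((k.natAbs : ℤ) : ZMod n) = ((k.sign * k : ℤ) : ZMod n) := by
              rw [Int.sign_mul_self_eq_natAbs]
            push_cast at this
            simpa using this
        · intro u hu
          simp at hu
          rw [hu]
    _ = k.natAbs * ∑ a : ZMod n, ∑ b : ZMod n, ‖K n a b‖ ^ 4 := by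
        rw [← Finset.mul_sum, Finset.sum_comm]
    _ ≤ _ := by
        gcongr
        exact K_fourth_moment n

/-- `‖K‖ ^ 4 ≤ C |k| n ^ (3 + 3/4)` -/
lemma K_bound' (n : ℕ) [NeZero n] (h : ZMod n) (k : ℤ) (hk : k ≠ 0) :
    ‖K n h (k : ZMod n)‖ ^ 16 ≤ 16 * k.natAbs ^ 4 * (41 ^ 16) ^ 3 * (n : ℝ) ^ 15 := by
  have hn : (0 : ℝ) < n := by exact_mod_cast Nat.pos_of_ne_zero (NeZero.ne n)
  have h1 := K_bound n h k hk
  have h2 : (n : ℝ) ≤ n.totient * n.divisors.card := by exact_mod_cast le_totient_mul_card_divisors n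
  have h3 : (n.divisors.card : ℝ) ^ 4 ≤ 41 ^ 16 * n := by
    exact_mod_cast card_divisors_pow_four_le n (NeZero.ne n)
  set d : ℝ := (n.divisors.card : ℝ)
  set X := ‖K n h (k : ZMod n)‖ ^ 4 with hX
  have hX0 : 0 ≤ X := by positivity
  have hd0 : 0 ≤ d := by positivity
  have h4 : (n : ℝ) * X ≤ n * (2 * k.natAbs * n ^ 3 * d ^ 3) := by
    calc (n : ℝ) * X ≤ (n.totient * d) * X := by gcongr
      _ = d * (n.totient * X) := by ring
      _ ≤ d * (k.natAbs * ((n : ℝ) ^ 2 * (2 * (n * d) ^ 2))) := by gcongr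
      _ = _ := by ring
  have h5 : X ≤ 2 * k.natAbs * n ^ 3 * d ^ 3 := le_of_mul_le_mul_left h4 hn
  calc ‖K n h (k : ZMod n)‖ ^ 16 = X ^ 4 := by rw [hX]; ring
    _ ≤ (2 * k.natAbs * n ^ 3 * d ^ 3) ^ 4 := by gcongr
    _ = 16 * k.natAbs ^ 4 * n ^ 12 * (d ^ 4) ^ 3 := by ring
    _ ≤ 16 * k.natAbs ^ 4 * n ^ 12 * (41 ^ 16 * n) ^ 3 := by gcongr
    _ = _ := by ring

end Kl


namespace Kl

lemma norm_std_sub_one (n : ℕ) [NeZero n] (j : ℕ) (hj0 : 0 < j) (hjn : j < n) :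
    4 * (min j (n - j) : ℕ) / (n : ℝ) ≤ ‖(ZMod.stdAddChar (j : ZMod n) : ℂ) - 1‖ := by
  have hn : (0 : ℝ) < n := by exact_mod_cast (by omega : 0 < n)
  have h1 : (ZMod.stdAddChar (j : ZMod n) : ℂ) = Complex.exp (Complex.I * ((2 * Real.pi * j / n : ℝ) : ℂ)) := by
    have := ZMod.stdAddChar_coe (N := n) (j : ℤ)
    push_cast at this
    rw [this]
    congr 1
    push_cast
    ring
  rw [h1, Complex.norm_exp_I_mul_ofReal_sub_one, norm_mul, Real.norm_eq_abs, Real.norm_eq_abs]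
  have hpi := Real.pi_pos
  have hkey : 2 * (min j (n - j) : ℕ) / (n : ℝ) ≤ Real.sin (2 * Real.pi * j / n / 2) := by
    rcases le_total j (n - j) with h | h
    · rw [min_eq_left h]
      have := Real.mul_le_sin (x := Real.pi * j / n) (by positivity) (by
        rw [div_le_div_iff₀ hn (by norm_num)]
        have : (j : ℝ) * 2 ≤ n := by exact_mod_cast (by omega : j * 2 ≤ n)
        nlinarith)
      calc _ = 2 / Real.pi * (Real.pi * j / n) := by field_simp
        _ ≤ _ := this
        _ = _ := by congr 1; field_simp
    · rw [min_eq_right h]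
      have hc : ((n - j : ℕ) : ℝ) = n - j := by push_cast [hjn.le]; ring
      have := Real.mul_le_sin (x := Real.pi * (n - j : ℕ) / n) (by positivity) (by
        rw [div_le_div_iff₀ hn (by norm_num)]
        have : ((n - j : ℕ) : ℝ) * 2 ≤ n := by exact_mod_cast (by omega : (n - j) * 2 ≤ n)
        nlinarith)
      calc _ = 2 / Real.pi * (Real.pi * (n - j : ℕ) / n) := by field_simp
        _ ≤ _ := this
        _ = Real.sin (Real.pi - 2 * Real.pi * j / n / 2) := by congr 1; rw [hc]; field_simp
        _ = _ := Real.sin_pi_sub _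
  have := le_abs_self (Real.sin (2 * Real.pi * j / n / 2))
  rw [abs_of_pos (by norm_num : (0 : ℝ) < 2)]
  calc _ = 2 * (2 * (min j (n - j) : ℕ) / (n : ℝ)) := by ring
    _ ≤ _ := by linarith

lemma geom_bound (n : ℕ) [NeZero n] (j : ℕ) (hj0 : 0 < j) (hjn : j < n) (Q : ℕ) :
    ‖∑ q ∈ Finset.range Q, (ZMod.stdAddChar (-((j : ZMod n) * (q : ZMod n))) : ℂ)‖ ≤
      n / 2 * (1 / (j : ℝ) + 1 / ((n - j : ℕ) : ℝ)) := by
  have hn : (0 : ℝ) < n := by exact_mod_cast (by omega : 0 < n)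
  have hj : (0 : ℝ) < j := by exact_mod_cast hj0
  have hnj : (0 : ℝ) < (n - j : ℕ) := by exact_mod_cast (by omega : 0 < n - j)
  have hm : (0 : ℝ) < (min j (n - j) : ℕ) := by exact_mod_cast (by omega : 0 < min j (n - j))
  have hb := norm_std_sub_one n j hj0 hjn
  have hb0 : 0 < 4 * (min j (n - j) : ℕ) / (n : ℝ) := by positivity
  set z : ℂ := ZMod.stdAddChar (j : ZMod n) with hz
  have h1 : ∀ q : ℕ, (ZMod.stdAddChar (-((j : ZMod n) * (q : ZMod n))) : ℂ) = (starRingEnd ℂ) (z ^ q) := by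
    intro q
    rw [AddChar.map_neg_eq_conj, hz, ← AddChar.map_nsmul_eq_pow, nsmul_eq_mul, mul_comm]
  simp_rw [h1]
  rw [← map_sum, RCLike.norm_conj]
  have hz1 : z ≠ 1 := by
    intro h
    rw [h, sub_self, norm_zero] at hb
    linarith
  rw [geom_sum_eq hz1, norm_div]
  have hznorm : ‖z‖ = 1 := norm_std n _
  have h2 : ‖z ^ Q - 1‖ ≤ 2 := by
    calc _ ≤ ‖z ^ Q‖ + ‖(1 : ℂ)‖ := norm_sub_le _ _
      _ = 2 := by rw [norm_pow, hznorm]; norm_num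
  calc _ ≤ 2 / (4 * (min j (n - j) : ℕ) / (n : ℝ)) := by gcongr
    _ = n / 2 * (1 / (min j (n - j) : ℕ)) := by field_simp; norm_num
    _ ≤ _ := by
      gcongr
      rcases le_total j (n - j) with h | h
      · rw [min_eq_left h]; have : 0 < 1 / ((n - j : ℕ) : ℝ) := by positivity
        linarith
      · rw [min_eq_right h]; have : 0 < 1 / (j : ℝ) := by positivity
        linarith

lemma sum_geom_bound (n : ℕ) [NeZero n] (Q : ℕ) (hQ : Q ≤ n) :
    ∑ h : ZMod n, ‖∑ q ∈ Finset.range Q, (ZMod.stdAddChar (-(h * (q : ZMod n))) : ℂ)‖ ≤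
      n * (2 + Real.log n) := by
  have hn : 0 < n := Nat.pos_of_ne_zero (NeZero.ne n)
  have h0 : ∑ h : ZMod n, ‖∑ q ∈ Finset.range Q, (ZMod.stdAddChar (-(h * (q : ZMod n))) : ℂ)‖ =
     ∑ j ∈ Finset.range n, ‖∑ q ∈ Finset.range Q, (ZMod.stdAddChar (-((j : ZMod n) * (q : ZMod n))) : ℂ)‖ := by
    apply Finset.sum_bij (fun v _ => v.val)
    · intro v _; simp [ZMod.val_lt]
    · intro a _ b _ h; exact ZMod.val_injective n h
    · intro b hb
      exact ⟨(b : ZMod n), Finset.mem_univ _, ZMod.val_cast_of_lt (by simpa using hb)⟩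
    · intro a _; simp only [ZMod.natCast_val, ZMod.cast_id', id_eq]
  rw [h0]
  obtain ⟨m, rfl⟩ : ∃ m, n = m + 1 := ⟨n - 1, by omega⟩
  rw [Finset.sum_range_succ']
  have hlast : ‖∑ q ∈ Finset.range Q, (ZMod.stdAddChar (-(((0 : ℕ) : ZMod (m+1)) * (q : ZMod (m+1)))) : ℂ)‖ ≤ ((m + 1 : ℕ) : ℝ) := by
    simp only [Nat.cast_zero, zero_mul, neg_zero, AddChar.map_zero_eq_one, Finset.sum_const, Finset.card_range, nsmul_eq_mul, mul_one]
    rw [Complex.norm_natCast]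
    exact_mod_cast hQ
  have hH : ∑ j ∈ Finset.range m, 1 / ((j + 1 : ℕ) : ℝ) ≤ 1 + Real.log (m + 1 : ℕ) := by
    have h1 := harmonic_le_one_add_log (m + 1)
    have h2 : ∑ j ∈ Finset.range m, 1 / ((j + 1 : ℕ) : ℝ) ≤ ((harmonic (m + 1) : ℚ) : ℝ) := by
      rw [harmonic, Finset.sum_range_succ]
      push_cast
      have : (0 : ℝ) ≤ ((m : ℝ) + 1)⁻¹ := by positivity
      simp only [one_div]
      linarith
    linarith
  have hmain : ∑ j ∈ Finset.range m, ‖∑ q ∈ Finset.range Q, (ZMod.stdAddChar (-(((j + 1 : ℕ) : ZMod (m+1)) * (q : ZMod (m+1)))) : ℂ)‖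
      ≤ ((m + 1 : ℕ) : ℝ) * (1 + Real.log (m + 1 : ℕ)) := by
    calc _ ≤ ∑ j ∈ Finset.range m, ((m + 1 : ℕ) : ℝ) / 2 * (1 / ((j + 1 : ℕ) : ℝ) + 1 / ((m + 1 - (j + 1) : ℕ) : ℝ)) := by
          apply Finset.sum_le_sum
          intro j hj
          apply geom_bound
          · omega
          · simp at hj; omega
      _ = ((m + 1 : ℕ) : ℝ) / 2 * (∑ j ∈ Finset.range m, 1 / ((j + 1 : ℕ) : ℝ) + ∑ j ∈ Finset.range m, 1 / ((m + 1 - (j + 1) : ℕ) : ℝ)) := by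
          rw [← Finset.sum_add_distrib, Finset.mul_sum]
      _ = ((m + 1 : ℕ) : ℝ) * ∑ j ∈ Finset.range m, 1 / ((j + 1 : ℕ) : ℝ) := by
          rw [← Finset.sum_range_reflect (fun j => 1 / ((j + 1 : ℕ) : ℝ)) m]
          have : ∀ j ∈ Finset.range m, 1 / ((m + 1 - (j + 1) : ℕ) : ℝ) = 1 / ((m - 1 - j + 1 : ℕ) : ℝ) := by
            intro j hj
            simp at hj
            congr 2; omega
          rw [Finset.sum_congr rfl this]; ring
      _ ≤ _ := by gcongr
  linarith

/-- the incomplete Kloosterman term -/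
noncomputable def tt (n : ℕ) [NeZero n] (k : ℤ) (q : ℕ) : ℂ :=
  if q.Coprime n then ZMod.stdAddChar ((k : ZMod n) * (q : ZMod n)⁻¹) else 0

lemma tt_eq (n : ℕ) [NeZero n] (k : ℤ) (q : ℕ) :
    tt n k q = (n : ℂ)⁻¹ * ∑ h : ZMod n, K n h k * ZMod.stdAddChar (-(h * (q : ZMod n))) := by
  have hn : (n : ℂ) ≠ 0 := by exact_mod_cast NeZero.ne n
  have h1 : ∑ h : ZMod n, K n h k * (ZMod.stdAddChar (-(h * (q : ZMod n))) : ℂ) =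
      ∑ u : (ZMod n)ˣ, (ZMod.stdAddChar ((k : ZMod n) * ((u⁻¹ : (ZMod n)ˣ) : ZMod n)) : ℂ) *
        (if (u : ZMod n) = (q : ZMod n) then (n : ℂ) else 0) := by
    simp only [K, Finset.sum_mul]
    rw [Finset.sum_comm]
    refine Finset.sum_congr rfl fun u _ => ?_
    have := sum_std n ((u : ZMod n) - q)
    simp only [sub_eq_zero] at this
    rw [← this, Finset.mul_sum]
    refine Finset.sum_congr rfl fun h _ => ?_
    rw [← AddChar.map_add_eq_mul, ← AddChar.map_add_eq_mul]
    congr 1; ring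
  rw [h1, tt]
  split_ifs with hq
  · rw [Finset.sum_eq_single (ZMod.unitOfCoprime q hq)]
    · rw [if_pos (by simp), ← ZMod.inv_coe_unit, ZMod.coe_unitOfCoprime]
      field_simp
    · intro u _ hu
      rw [if_neg, mul_zero]
      intro h
      exact hu (Units.ext (by rw [h, ZMod.coe_unitOfCoprime]))
    · simp
  · rw [Finset.sum_eq_zero, mul_zero]
    intro u _
    rw [if_neg, mul_zero]
    intro h
    apply hq
    have := u.isUnit
    rw [h] at this
    exact (ZMod.isUnit_iff_coprime q n).1 this

lemma tt_sum_bound (n : ℕ) [NeZero n] (k : ℤ) (M : ℝ) (hM : ∀ h : ZMod n, ‖K n h k‖ ≤ M) (Q : ℕ) (hQ : Q ≤ n) :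
    ‖∑ q ∈ Finset.range Q, tt n k q‖ ≤ M * (2 + Real.log n) := by
  have hn : (0 : ℝ) < n := by exact_mod_cast Nat.pos_of_ne_zero (NeZero.ne n)
  have hM0 : 0 ≤ M := (norm_nonneg _).trans (hM 0)
  have : ∑ q ∈ Finset.range Q, tt n k q = (n : ℂ)⁻¹ * ∑ h : ZMod n, K n h k *
      ∑ q ∈ Finset.range Q, (ZMod.stdAddChar (-(h * (q : ZMod n))) : ℂ) := by
    simp_rw [tt_eq, ← Finset.mul_sum]
    rw [Finset.sum_comm]
    simp_rw [← Finset.mul_sum]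
  rw [this, norm_mul, norm_inv, Complex.norm_natCast]
  calc _ ≤ (n : ℝ)⁻¹ * ∑ h : ZMod n, M * ‖∑ q ∈ Finset.range Q, (ZMod.stdAddChar (-(h * (q : ZMod n))) : ℂ)‖ := by
        gcongr
        refine (norm_sum_le _ _).trans ?_
        apply Finset.sum_le_sum
        intro h _
        rw [norm_mul]
        gcongr
        exact hM h
    _ ≤ (n : ℝ)⁻¹ * (M * (n * (2 + Real.log n))) := by
        rw [← Finset.mul_sum]
        gcongr
        exact sum_geom_bound n Q hQ
    _ = _ := by field_simp

lemma abel_bound (w : ℕ → ℝ) (t : ℕ → ℂ) (hw : Antitone w) (hw0 : ∀ q, 0 ≤ w q) (B : ℝ) (Q : ℕ)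
    (hB : ∀ j ≤ Q, ‖∑ q ∈ Finset.range j, t q‖ ≤ B) :
    ‖∑ q ∈ Finset.range Q, w q • t q‖ ≤ w 0 * B := by
  have hB0 : 0 ≤ B := by simpa using hB 0 (Nat.zero_le _)
  rw [Finset.sum_range_by_parts]
  have hsum : ∀ m, ∑ i ∈ Finset.range m, (w i - w (i + 1)) = w 0 - w m := by
    intro m
    exact Finset.sum_range_sub' w m
  calc _ ≤ ‖w (Q - 1) • ∑ i ∈ Finset.range Q, t i‖ + ‖∑ i ∈ Finset.range (Q - 1), (w (i + 1) - w i) • ∑ i ∈ Finset.range (i + 1), t i‖ := norm_sub_le _ _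
    _ ≤ w (Q - 1) * B + ∑ i ∈ Finset.range (Q - 1), (w i - w (i + 1)) * B := by
        gcongr
        · rw [norm_smul, Real.norm_of_nonneg (hw0 _)]
          exact mul_le_mul_of_nonneg_left (hB Q le_rfl) (hw0 _)
        · refine (norm_sum_le _ _).trans ?_
          apply Finset.sum_le_sum
          intro i hi
          simp at hi
          rw [norm_smul, Real.norm_eq_abs, abs_sub_comm, abs_of_nonneg (by have := hw (Nat.le_succ i); simp at this; linarith)]
          apply mul_le_mul_of_nonneg_left (hB (i+1) (by omega))
          have := hw (Nat.le_succ i); simp at this; linarith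
    _ = w 0 * B := by rw [← Finset.sum_mul, hsum]; ring

/-- The error. -/
noncomputable def err (k : ℤ) (x : ℝ) : ℝ :=
  (16 * k.natAbs ^ 4 * (41 ^ 16) ^ 3) ^ (1 / 16 : ℝ) * (x ^ (-(1 / 16) : ℝ) * (2 + Real.log x))

lemma err_tendsto (k : ℤ) : Tendsto (fun n : ℕ => err k n) atTop (𝓝 0) := by
  have h : Tendsto (fun x : ℝ => err k x) atTop (𝓝 0) := by
    unfold err
    rw [show (0 : ℝ) = (16 * k.natAbs ^ 4 * (41 ^ 16) ^ 3) ^ (1 / 16 : ℝ) * 0 by simp]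
    apply Tendsto.const_mul
    have h1 : Tendsto (fun x : ℝ => x ^ (-(1 / 16) : ℝ)) atTop (𝓝 0) :=
      tendsto_rpow_neg_atTop (by norm_num)
    have h2 : Tendsto (fun x : ℝ => Real.log x / x ^ ((1 / 16) : ℝ)) atTop (𝓝 0) :=
      (isLittleO_log_rpow_atTop (by norm_num)).tendsto_div_nhds_zero
    have h3 := (h1.const_mul 2).add h2
    simp only [mul_zero, add_zero] at h3
    refine h3.congr' ?_
    filter_upwards [eventually_gt_atTop 0] with x hx
    rw [Real.rpow_neg hx.le]
    field_simp
  exact h.comp tendsto_natCast_atTop_atTop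

lemma weighted_bound (n : ℕ) [NeZero n] (k : ℤ) (hk : k ≠ 0) (Q : ℕ) (hQ : Q ≤ n) :
    ‖∑ q ∈ Finset.range Q, (1 / ((n : ℝ) + q)) • tt n k q‖ ≤ err k n := by
  have hn : (0 : ℝ) < n := by exact_mod_cast Nat.pos_of_ne_zero (NeZero.ne n)
  set A : ℝ := 16 * k.natAbs ^ 4 * (41 ^ 16) ^ 3 with hA
  have hA0 : 0 ≤ A := by positivity
  have hM : ∀ h : ZMod n, ‖K n h k‖ ≤ A ^ (1 / 16 : ℝ) * (n : ℝ) ^ (15 / 16 : ℝ) := by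
    intro h
    have h1 := K_bound' n h k hk
    rw [← hA] at h1
    have h2 : (A ^ (1 / 16 : ℝ) * (n : ℝ) ^ (15 / 16 : ℝ)) ^ 16 = A * n ^ 15 := by
      rw [mul_pow, ← Real.rpow_natCast, ← Real.rpow_mul hA0, ← Real.rpow_natCast, ← Real.rpow_mul hn.le]
      norm_num
    rw [← h2] at h1
    exact le_of_pow_le_pow_left₀ (by norm_num) (by positivity) h1
  have := abel_bound (fun q => 1 / ((n : ℝ) + q)) (tt n k) (by
    intro i j hij
    have : (i : ℝ) ≤ j := by exact_mod_cast hij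
    simp only
    gcongr) (fun q => by positivity) _ Q (fun j hj => tt_sum_bound n k _ hM j (hj.trans hQ))
  refine this.trans (le_of_eq ?_)
  simp only [Nat.cast_zero, add_zero]
  rw [err, ← hA, show (-(1/16) : ℝ) = 15/16 - 1 by norm_num, Real.rpow_sub hn, Real.rpow_one]
  field_simp

end Kl


namespace Kl

noncomputable def nset (a b R : ℝ) : Finset ℕ := Finset.Ioo ⌊a * R⌋₊ ⌈b * R⌉₊
noncomputable def qset (R : ℝ) (n : ℕ) : Finset ℕ := (Finset.range (⌊R⌋₊ + 1)).filter (fun q => q.Coprime n)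

noncomputable def pt (n q : ℕ) : UnitAddCircle := ((((q : ZMod n)⁻¹.val / n : ℝ)) : UnitAddCircle)

lemma mem_nset {a b R : ℝ} (ha : 0 ≤ a) (hR : 0 ≤ R) (n : ℕ) :
    n ∈ nset a b R ↔ a * R < n ∧ (n : ℝ) < b * R := by
  rw [nset, Finset.mem_Ioo, Nat.floor_lt (by positivity), Nat.lt_ceil]

lemma mem_qset {R : ℝ} (hR : 0 ≤ R) (n q : ℕ) :
    q ∈ qset R n ↔ (q : ℝ) ≤ R ∧ q.Coprime n := by
  rw [qset, Finset.mem_filter, Finset.mem_range, Nat.lt_succ_iff, Nat.le_floor_iff hR]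

noncomputable def LL (a b R : ℝ) (F : C(UnitAddCircle, ℂ)) : ℂ :=
  ∑ n ∈ nset a b R, ∑ q ∈ qset R n,
    (1 / ((n : ℝ) * (n + q))) • (F (pt n q) - ∫ x, F x ∂AddCircle.haarAddCircle)

lemma card_nset_le (a b R : ℝ) (hb : 0 ≤ b) (hR : 0 ≤ R) : ((nset a b R).card : ℝ) ≤ b * R + 1 := by
  rw [nset, Nat.card_Ioo]
  have h1 : (⌈b * R⌉₊ : ℝ) < b * R + 1 := Nat.ceil_lt_add_one (by positivity)
  have h2 : ((⌈b * R⌉₊ - ⌊a * R⌋₊ - 1 : ℕ) : ℝ) ≤ ⌈b * R⌉₊ := by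
    exact_mod_cast (by omega : ⌈b * R⌉₊ - ⌊a * R⌋₊ - 1 ≤ ⌈b * R⌉₊)
  linarith

lemma card_qset_le (R : ℝ) (n : ℕ) (hR : 0 ≤ R) : ((qset R n).card : ℝ) ≤ R + 1 := by
  have h1 : (qset R n).card ≤ ⌊R⌋₊ + 1 := (Finset.card_filter_le _ _).trans (by simp)
  have h2 := Nat.floor_le hR
  have h3 : ((qset R n).card : ℝ) ≤ ⌊R⌋₊ + 1 := by exact_mod_cast h1
  linarith

lemma weight_le {a b R : ℝ} (ha : 1 < a) (hR : 1 ≤ R) {n : ℕ} (hn : n ∈ nset a b R) (q : ℕ) :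
    1 / ((n : ℝ) * (n + q)) ≤ 1 / R ^ 2 := by
  rw [mem_nset (by linarith) (by linarith)] at hn
  have : R ≤ n := by nlinarith [hn.1]
  have hq : (0 : ℝ) ≤ q := by positivity
  gcongr
  nlinarith

lemma double_sum_le {a b R : ℝ} (ha : 1 < a) (hb : 0 ≤ b) (hR : 1 ≤ R) (C : ℝ) (hC : 0 ≤ C) (g : ℕ → ℕ → ℂ)
    (hg : ∀ n ∈ nset a b R, ∀ q ∈ qset R n, ‖g n q‖ ≤ C) :
    ‖∑ n ∈ nset a b R, ∑ q ∈ qset R n, (1 / ((n : ℝ) * (n + q))) • g n q‖ ≤ 2 * (b + 1) * C := by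
  calc _ ≤ ∑ n ∈ nset a b R, ∑ q ∈ qset R n, 1 / R ^ 2 * C := by
        refine (norm_sum_le _ _).trans (Finset.sum_le_sum fun n hn => ?_)
        refine (norm_sum_le _ _).trans (Finset.sum_le_sum fun q hq => ?_)
        rw [norm_smul, Real.norm_of_nonneg (by positivity)]
        exact mul_le_mul (weight_le ha hR hn q) (hg n hn q hq) (norm_nonneg _) (by positivity)
    _ ≤ ∑ n ∈ nset a b R, (R + 1) * (1 / R ^ 2 * C) := by
        refine Finset.sum_le_sum fun n hn => ?_
        rw [Finset.sum_const, nsmul_eq_mul]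
        gcongr
        exact card_qset_le R n (by linarith)
    _ ≤ (b * R + 1) * ((R + 1) * (1 / R ^ 2 * C)) := by
        rw [Finset.sum_const, nsmul_eq_mul]
        gcongr
        exact card_nset_le a b R hb (by linarith)
    _ = ((b * R + 1) * (R + 1) / R ^ 2) * C := by ring
    _ ≤ _ := by
        gcongr
        rw [div_le_iff₀ (by positivity)]
        nlinarith [mul_nonneg hb (by linarith : 0 ≤ R - 1), mul_nonneg (mul_nonneg hb (by linarith : 0 ≤ R - 1)) (by linarith : 0 ≤ R)]

lemma LL_bound {a b R : ℝ} (ha : 1 < a) (hb : 0 ≤ b) (hR : 1 ≤ R) (F : C(UnitAddCircle, ℂ)) :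
    ‖LL a b R F‖ ≤ 2 * (b + 1) * (2 * ‖F‖) := by
  apply double_sum_le ha hb hR _ (by positivity)
  intro n _ q _
  have h1 : ‖∫ x, F x ∂(AddCircle.haarAddCircle : Measure UnitAddCircle)‖ ≤ ‖F‖ := by
    have := norm_integral_le_of_norm_le_const (μ := (AddCircle.haarAddCircle : Measure UnitAddCircle)) (f := F) (C := ‖F‖)
      (Eventually.of_forall fun x => F.norm_coe_le_norm x)
    simpa using this
  calc _ ≤ ‖F (pt n q)‖ + _ := norm_sub_le _ _
    _ ≤ ‖F‖ + ‖F‖ := add_le_add (F.norm_coe_le_norm _) h1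
    _ = _ := by ring

lemma int_cont (F : C(UnitAddCircle, ℂ)) : Integrable F (AddCircle.haarAddCircle : Measure UnitAddCircle) :=
  F.continuous.integrable_of_hasCompactSupport (HasCompactSupport.of_compactSpace _)

lemma LL_add (a b R : ℝ) (F G : C(UnitAddCircle, ℂ)) : LL a b R (F + G) = LL a b R F + LL a b R G := by
  unfold LL
  simp_rw [← Finset.sum_add_distrib, ← smul_add, ContinuousMap.add_apply]
  rw [integral_add (int_cont F) (int_cont G)]
  refine Finset.sum_congr rfl fun n _ => Finset.sum_congr rfl fun q _ => ?_
  congr 1; ring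

lemma LL_smul (a b R : ℝ) (c : ℂ) (F : C(UnitAddCircle, ℂ)) : LL a b R (c • F) = c * LL a b R F := by
  unfold LL
  simp_rw [Finset.mul_sum, ContinuousMap.smul_apply]
  rw [integral_smul]
  refine Finset.sum_congr rfl fun n _ => Finset.sum_congr rfl fun q _ => ?_
  rw [← smul_sub, smul_eq_mul, mul_smul_comm]

lemma integral_fourier' (k : ℤ) : ∫ x, fourier k x ∂(AddCircle.haarAddCircle : Measure UnitAddCircle) = if k = 0 then 1 else 0 := by
  have h := (orthonormal_iff_ite.1 (orthonormal_fourier (T := 1))) 0 k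
  rw [ContinuousMap.inner_toLp (𝕜 := ℂ)] at h
  simp only [fourier_zero, map_one, mul_one] at h
  rw [h]
  simp [eq_comm]

lemma fourier_pt (n : ℕ) [NeZero n] (k : ℤ) (q : ℕ) :
    (fourier k (pt n q) : ℂ) = ZMod.stdAddChar ((k : ZMod n) * (q : ZMod n)⁻¹) := by
  rw [fourier_apply, pt, ← ZMod.toAddCircle_apply, ← map_zsmul, zsmul_eq_mul]
  rfl

lemma LL_fourier {a b : ℝ} (ha : 1 < a) (hb : 0 ≤ b) (k : ℤ) : Tendsto (fun R => LL a b R (fourier k)) atTop (𝓝 0) := by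
  by_cases hk : k = 0
  · subst hk
    have : ∀ R, LL a b R (fourier 0) = 0 := by
      intro R
      unfold LL
      rw [integral_fourier']
      simp
    simp [this]
  rw [Metric.tendsto_atTop]
  intro ε hε
  have hε' : 0 < ε / (b + 2) := by positivity
  obtain ⟨N, hN⟩ := (Metric.tendsto_atTop.1 (err_tendsto k)) _ hε'
  refine ⟨max 1 N, fun R hR => ?_⟩
  have hR1 : 1 ≤ R := (le_max_left _ _).trans hR
  have hRN : (N : ℝ) ≤ R := (le_max_right _ _).trans hR
  rw [dist_zero_right]
  have hsub : LL a b R (fourier k) = ∑ n ∈ nset a b R, (1 / (n : ℝ)) • ∑ q ∈ Finset.range (⌊R⌋₊ + 1),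
      if q.Coprime n then (1 / ((n : ℝ) + q)) • (fourier k (pt n q) : ℂ) else 0 := by
    unfold LL
    rw [integral_fourier', if_neg hk]
    refine Finset.sum_congr rfl fun n _ => ?_
    rw [qset, Finset.sum_filter, Finset.smul_sum]
    refine Finset.sum_congr rfl fun q _ => ?_
    split_ifs
    · rw [smul_smul, sub_zero, one_div_mul_one_div]
    · simp
  rw [hsub]
  calc _ ≤ ∑ n ∈ nset a b R, (1 / R) * (ε / (b + 2)) := by
        refine (norm_sum_le _ _).trans (Finset.sum_le_sum fun n hn => ?_)
        rw [mem_nset (by linarith) (by linarith)] at hn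
        have hRn : R < n := by nlinarith [hn.1]
        have hn0 : n ≠ 0 := by
          rintro rfl
          simp at hRn; linarith
        have : NeZero n := ⟨hn0⟩
        rw [norm_smul, Real.norm_of_nonneg (by positivity)]
        have hQ : ⌊R⌋₊ + 1 ≤ n := by
          rw [Nat.succ_le_iff, Nat.floor_lt (by linarith)]; exact hRn
        have := weighted_bound n k hk (⌊R⌋₊ + 1) hQ
        have h2 := hN n (by exact_mod_cast (hRN.trans hRn.le))
        rw [Real.dist_eq, sub_zero] at h2
        gcongr
        refine le_trans (le_of_eq ?_) (this.trans ((le_abs_self _).trans h2.le))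
        congr 1
        refine Finset.sum_congr rfl fun q _ => ?_
        rw [tt]
        split_ifs
        · rw [fourier_pt]
        · simp
    _ ≤ (b * R + 1) * ((1 / R) * (ε / (b + 2))) := by
        rw [Finset.sum_const, nsmul_eq_mul]
        gcongr
        exact card_nset_le a b R hb (by linarith)
    _ = ((b * R + 1) / R) / (b + 2) * ε := by field_simp
    _ < 1 * ε := by
        gcongr
        rw [div_div, div_lt_one (by positivity)]
        nlinarith
    _ = ε := one_mul _

theorem LL_tendsto {a b : ℝ} (ha : 1 < a) (hb : 0 ≤ b) (F : C(UnitAddCircle, ℂ)) :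
    Tendsto (fun R => LL a b R F) atTop (𝓝 0) := by
  have hspan : ∀ G ∈ Submodule.span ℂ (Set.range (fourier (T := 1))), Tendsto (fun R => LL a b R G) atTop (𝓝 0) := by
    intro G hG
    induction hG using Submodule.span_induction with
    | mem x h => obtain ⟨k, rfl⟩ := h; exact LL_fourier ha hb k
    | zero =>
      have : ∀ R, LL a b R 0 = 0 := by intro R; simp [LL]
      simp [this]
    | add x y _ _ hx hy => simp_rw [LL_add]; simpa using hx.add hy
    | smul c x _ hx => simp_rw [LL_smul]; simpa using hx.const_mul c
  have hF : F ∈ closure (Submodule.span ℂ (Set.range (fourier (T := 1))) : Set C(UnitAddCircle, ℂ)) := by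
    rw [← Submodule.topologicalClosure_coe, span_fourier_closure_eq_top]; trivial
  rw [Metric.tendsto_atTop]
  intro ε hε
  set C := 2 * (b + 1) * 2 with hC
  have hC0 : 0 < C := by positivity
  obtain ⟨G, hG, hFG⟩ := Metric.mem_closure_iff.1 hF (ε / (2 * C)) (by positivity)
  obtain ⟨N, hN⟩ := Metric.tendsto_atTop.1 (hspan G hG) (ε / 2) (by positivity)
  refine ⟨max 1 N, fun R hR => ?_⟩
  have hR1 : 1 ≤ R := (le_max_left _ _).trans hR
  have h1 := hN R ((le_max_right _ _).trans hR)
  rw [dist_zero_right] at h1 ⊢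
  have h2 := LL_bound ha hb hR1 (F - G)
  rw [dist_eq_norm] at hFG
  have h3 : LL a b R F = LL a b R (F - G) + LL a b R G := by rw [← LL_add]; simp
  rw [h3]
  calc _ ≤ ‖LL a b R (F - G)‖ + ‖LL a b R G‖ := norm_add_le _ _
    _ < C * (ε / (2 * C)) + ε / 2 := by
        have : C * ‖F - G‖ < C * (ε / (2 * C)) := by gcongr
        rw [hC] at this
        rw [← mul_assoc] at h2
        linarith
    _ = ε := by field_simp; norm_num

end Kl


namespace Kl

noncomputable def gg (t : ℝ) : ℝ := Real.log (1 + 1 / t) / t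

lemma gg_nonneg {t : ℝ} (ht : 0 < t) : 0 ≤ gg t := by
  unfold gg
  have : 0 < 1 / t := by positivity
  have := Real.log_nonneg (by linarith : 1 ≤ 1 + 1 / t)
  positivity

lemma gg_anti : AntitoneOn gg (Ioi 0) := by
  intro x hx y hy hxy
  simp only [mem_Ioi] at hx hy
  unfold gg
  have : 0 < 1 / x := by positivity
  have : 0 < 1 / y := by positivity
  have h0 := Real.log_nonneg (by linarith : 1 ≤ 1 + 1 / x)
  have h1 : Real.log (1 + 1 / y) ≤ Real.log (1 + 1 / x) := by
    apply Real.log_le_log (by positivity)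
    gcongr
  gcongr

lemma gg_cont : ContinuousOn gg (Ioi 0) := by
  unfold gg
  intro x hx
  simp only [mem_Ioi] at hx
  apply ContinuousAt.continuousWithinAt
  have : 0 < 1 / x := by positivity
  have h2 : 1 + 1 / x ≠ 0 := by positivity
  have h3 : x ≠ 0 := hx.ne'
  fun_prop (disch := assumption)

lemma gg_ii {x y : ℝ} (hx : 0 < x) (hy : 0 < y) : IntervalIntegrable gg volume x y := by
  apply ContinuousOn.intervalIntegrable
  apply gg_cont.mono
  intro z hz
  rw [mem_uIcc] at hz
  simp only [mem_Ioi]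
  rcases hz with h | h <;> linarith

lemma gg_prim_tendsto {c x₀ : ℝ} (hc : 0 < c) (hx : 0 < x₀) {l : Filter ℝ} {u : ℝ → ℝ} (hu : Tendsto u l (𝓝 x₀)) :
    Tendsto (fun R => ∫ t in c..u R, gg t) l (𝓝 (∫ t in c..x₀, gg t)) := by
  have hd : HasDerivAt (fun u => ∫ t in c..u, gg t) (gg x₀) x₀ := by
    apply intervalIntegral.integral_hasDerivAt_right (gg_ii hc hx)
    · exact gg_cont.stronglyMeasurableAtFilter isOpen_Ioi x₀ hx
    · exact gg_cont.continuousAt (Ioi_mem_nhds hx)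
  exact hd.continuousAt.tendsto.comp hu

lemma gg_int_tendsto {a b : ℝ} (ha : 0 < a) (hb : 0 < b) {l : Filter ℝ} {u v : ℝ → ℝ} (hu : Tendsto u l (𝓝 a))
    (hv : Tendsto v l (𝓝 b)) :
    Tendsto (fun R => ∫ t in u R..v R, gg t) l (𝓝 (∫ t in a..b, gg t)) := by
  have h1 := gg_prim_tendsto ha ha hu
  have h2 := gg_prim_tendsto ha hb hv
  have h3 := h2.sub h1
  simp only [intervalIntegral.integral_same, sub_zero] at h3
  refine h3.congr' ?_
  filter_upwards [hu.eventually (lt_mem_nhds ha), hv.eventually (lt_mem_nhds hb)] with R h4 h5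
  exact intervalIntegral.integral_interval_sub_left (gg_ii ha h5) (gg_ii ha h4)

lemma floor_div_tendsto (a : ℝ) (ha : 0 ≤ a) : Tendsto (fun R : ℝ => (⌊a * R⌋₊ : ℝ) / R) atTop (𝓝 a) :=
  tendsto_nat_floor_mul_div_atTop ha

lemma ceil_div_tendsto (a : ℝ) (ha : 0 ≤ a) : Tendsto (fun R : ℝ => (⌈a * R⌉₊ : ℝ) / R) atTop (𝓝 a) :=
  tendsto_nat_ceil_mul_div_atTop ha

lemma inv_tendsto : Tendsto (fun R : ℝ => 1 / R) atTop (𝓝 0) := by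
  simpa using tendsto_inv_atTop_zero (𝕜 := ℝ)

lemma S_tendsto {a b : ℝ} (ha : 0 < a) (hab : a < b) :
    Tendsto (fun R : ℝ => ∑ n ∈ nset a b R, gg (n / R) / R) atTop (𝓝 (∫ t in a..b, gg t)) := by
  have hb : 0 < b := ha.trans hab
  have l1 : Tendsto (fun R : ℝ => ∫ t in ((⌊a * R⌋₊ + 1 : ℕ) : ℝ) / R..(⌈b * R⌉₊ : ℝ) / R, gg t) atTop (𝓝 (∫ t in a..b, gg t)) := by
    apply gg_int_tendsto ha hb _ (ceil_div_tendsto b hb.le)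
    have := (floor_div_tendsto a ha.le).add inv_tendsto
    simp only [add_zero] at this
    refine this.congr fun R => ?_
    push_cast; ring
  have l2 : Tendsto (fun R : ℝ => ∫ t in (⌊a * R⌋₊ : ℝ) / R..((⌈b * R⌉₊ - 1 : ℕ) : ℝ) / R, gg t) atTop (𝓝 (∫ t in a..b, gg t)) := by
    apply gg_int_tendsto ha hb (floor_div_tendsto a ha.le)
    have := (ceil_div_tendsto b hb.le).sub inv_tendsto
    simp only [sub_zero] at this
    refine this.congr' ?_
    filter_upwards [eventually_gt_atTop 0] with R hR
    have : 1 ≤ ⌈b * R⌉₊ := by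
      rw [Nat.one_le_ceil_iff]; positivity
    push_cast [this]; ring
  have hlarge : ∀ᶠ R : ℝ in atTop, 0 < R ∧ 1 ≤ a * R ∧ a * R + 2 ≤ b * R := by
    filter_upwards [eventually_ge_atTop (max 1 (max (1/a) (2 / (b - a))))] with R hR
    have h1 : 1 ≤ R := (le_max_left _ _).trans hR
    have h2 : 1 / a ≤ R := (le_max_left _ _).trans ((le_max_right _ _).trans hR)
    have h3 : 2 / (b - a) ≤ R := (le_max_right _ _).trans ((le_max_right _ _).trans hR)
    rw [div_le_iff₀ ha] at h2
    rw [div_le_iff₀ (by linarith)] at h3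
    refine ⟨by linarith, by linarith, by linarith⟩
  refine tendsto_of_tendsto_of_tendsto_of_le_of_le' l1 l2 ?_ ?_
  · filter_upwards [hlarge] with R ⟨hR, h1, h2⟩
    have hm : ⌊a * R⌋₊ + 1 ≤ ⌈b * R⌉₊ := by
      have h3 : (⌊a * R⌋₊ : ℝ) ≤ a * R := Nat.floor_le (by linarith)
      have h4 := Nat.le_ceil (b * R)
      have : ((⌊a * R⌋₊ + 1 : ℕ) : ℝ) ≤ ⌈b * R⌉₊ := by push_cast; linarith
      exact_mod_cast this
    have hanti : AntitoneOn (fun x : ℝ => gg (x / R)) (Icc ((⌊a * R⌋₊ + 1 : ℕ) : ℝ) (⌈b * R⌉₊ : ℝ)) := by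
      intro x hx y hy hxy
      have hpos : (0 : ℝ) < ((⌊a * R⌋₊ + 1 : ℕ) : ℝ) := by positivity
      have hx0 : 0 < x := hpos.trans_le hx.1
      have hy0 : 0 < y := hpos.trans_le hy.1
      apply gg_anti (by simp only [mem_Ioi]; positivity) (by simp only [mem_Ioi]; positivity)
      gcongr
    have := AntitoneOn.integral_le_sum_Ico hm hanti
    rw [intervalIntegral.integral_comp_div _ hR.ne', smul_eq_mul] at this
    have hs : nset a b R = Finset.Ico (⌊a * R⌋₊ + 1) ⌈b * R⌉₊ := by
      ext; simp [nset, Nat.succ_le_iff]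
    rw [hs, ← Finset.sum_div, le_div_iff₀ hR, mul_comm]
    exact this
  · filter_upwards [hlarge] with R ⟨hR, h1, h2⟩
    have hm : ⌊a * R⌋₊ + 1 ≤ ⌈b * R⌉₊ := by
      have h3 : (⌊a * R⌋₊ : ℝ) ≤ a * R := Nat.floor_le (by linarith)
      have h4 := Nat.le_ceil (b * R)
      have : ((⌊a * R⌋₊ + 1 : ℕ) : ℝ) ≤ ⌈b * R⌉₊ := by push_cast; linarith
      exact_mod_cast this
    have hfl : 1 ≤ ⌊a * R⌋₊ := by rw [Nat.one_le_floor_iff]; exact h1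
    have hanti : AntitoneOn (fun x : ℝ => gg (x / R)) (Icc ((⌊a * R⌋₊ : ℕ) : ℝ) ((⌈b * R⌉₊ - 1 : ℕ) : ℝ)) := by
      intro x hx y hy hxy
      have hpos : (0 : ℝ) < ((⌊a * R⌋₊ : ℕ) : ℝ) := by exact_mod_cast hfl
      have hx0 : 0 < x := hpos.trans_le hx.1
      have hy0 : 0 < y := hpos.trans_le hy.1
      apply gg_anti (by simp only [mem_Ioi]; positivity) (by simp only [mem_Ioi]; positivity)
      gcongr
    have := AntitoneOn.sum_le_integral_Ico (by omega) hanti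
    rw [intervalIntegral.integral_comp_div _ hR.ne', smul_eq_mul] at this
    have hs : nset a b R = Finset.Ico (⌊a * R⌋₊ + 1) (⌈b * R⌉₊ - 1 + 1) := by
      ext; simp [nset, Nat.succ_le_iff]; omega
    rw [hs, ← Finset.sum_div, div_le_iff₀ hR, ← Finset.sum_Ico_add' (fun n : ℕ => gg (n / R))]
    rw [mul_comm R] at this
    exact this

/-- unrestricted double sum -/
noncomputable def AA (a b R : ℝ) : ℝ :=
  ∑ n ∈ nset a b R, ∑ q ∈ Finset.range ⌊R⌋₊, 1 / ((n : ℝ) * (n + (q + 1 : ℕ)))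

lemma inner_bound (n Q : ℕ) (hn : 0 < n) (R : ℝ) (hQ : (Q : ℝ) ≤ R) (hQ2 : R < Q + 1) :
    ∑ q ∈ Finset.range Q, 1 / ((n : ℝ) + (q + 1 : ℕ)) ≤ Real.log (1 + R / n) ∧
    Real.log (1 + R / n) - 1 / n ≤ ∑ q ∈ Finset.range Q, 1 / ((n : ℝ) + (q + 1 : ℕ)) := by
  have hn' : (0 : ℝ) < n := by exact_mod_cast hn
  have hR : 0 ≤ R := le_trans (by positivity) hQ
  have hlog : ∀ x : ℝ, 0 < x → Real.log (x + 1) - Real.log x ≤ 1 / x := by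
    intro x hx
    rw [← Real.log_div (by positivity) (by positivity)]
    have := Real.log_le_sub_one_of_pos (x := (x + 1) / x) (by positivity)
    calc _ ≤ _ := this
      _ = _ := by field_simp; ring
  have hlog2 : ∀ x : ℝ, 0 < x → 1 / (x + 1) ≤ Real.log (x + 1) - Real.log x := by
    intro x hx
    have := Real.log_le_sub_one_of_pos (x := x / (x + 1)) (by positivity)
    rw [Real.log_div (by positivity) (by positivity)] at this
    have h2 : x / (x + 1) - 1 = - (1 / (x + 1)) := by field_simp; ring
    linarith
  have e0 : Real.log (1 + R / n) = Real.log (n + R) - Real.log n := by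
    rw [← Real.log_div (by positivity) (by positivity)]
    congr 1; field_simp
  constructor
  · have : ∑ q ∈ Finset.range Q, 1 / ((n : ℝ) + (q + 1 : ℕ)) ≤ ∑ q ∈ Finset.range Q, (Real.log ((n : ℝ) + (q + 1 : ℕ)) - Real.log (n + q)) := by
      apply Finset.sum_le_sum
      intro q _
      have := hlog2 (n + q) (by positivity)
      push_cast
      rw [← add_assoc]
      exact this
    rw [Finset.sum_range_sub (fun q : ℕ => Real.log ((n : ℝ) + q))] at this
    rw [e0]
    simp only [Nat.cast_zero, add_zero] at this
    have h3 : Real.log (n + Q) ≤ Real.log (n + R) := Real.log_le_log (by positivity) (by linarith)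
    linarith
  · have : ∑ q ∈ Finset.range Q, (Real.log ((n : ℝ) + 1 + (q + 1 : ℕ)) - Real.log (n + 1 + q)) ≤ ∑ q ∈ Finset.range Q, 1 / ((n : ℝ) + (q + 1 : ℕ)) := by
      apply Finset.sum_le_sum
      intro q _
      have := hlog (n + 1 + q) (by positivity)
      push_cast
      rw [← add_assoc, show (n : ℝ) + (q + 1) = n + 1 + q by ring]
      exact this
    rw [Finset.sum_range_sub (fun q : ℕ => Real.log ((n : ℝ) + 1 + q))] at this
    simp only [Nat.cast_zero, add_zero] at this
    rw [e0]
    have h3 : Real.log (n + R) ≤ Real.log (n + 1 + Q) := Real.log_le_log (by positivity) (by linarith)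
    have h4 := hlog n hn'
    linarith

lemma AA_tendsto {a b : ℝ} (ha : 1 < a) (hab : a < b) :
    Tendsto (fun R : ℝ => AA a b R) atTop (𝓝 (∫ t in a..b, gg t)) := by
  have hb : 0 < b := by linarith
  have hS := S_tendsto (by linarith : 0 < a) hab
  have hz : Tendsto (fun R : ℝ => AA a b R - ∑ n ∈ nset a b R, gg (n / R) / R) atTop (𝓝 0) := by
    have h0 : Tendsto (fun R : ℝ => (b + 1) * (1 / R)) atTop (𝓝 0) := by
      simpa using inv_tendsto.const_mul (b + 1)
    refine squeeze_zero_norm' ?_ h0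
    filter_upwards [eventually_ge_atTop 1] with R hR
    rw [AA, ← Finset.sum_sub_distrib]
    calc _ ≤ ∑ n ∈ nset a b R, 1 / R ^ 2 := by
          refine (norm_sum_le _ _).trans (Finset.sum_le_sum fun n hn => ?_)
          rw [mem_nset (by linarith) (by linarith)] at hn
          have hRn : R < n := by nlinarith [hn.1]
          have hn0 : (0 : ℝ) < n := by linarith
          obtain ⟨h1, h2⟩ := inner_bound n ⌊R⌋₊ (by exact_mod_cast hn0) R (Nat.floor_le (by linarith)) (Nat.lt_floor_add_one R)
          have e1 : ∑ q ∈ Finset.range ⌊R⌋₊, 1 / ((n : ℝ) * (n + (q + 1 : ℕ))) = (1 / n) * ∑ q ∈ Finset.range ⌊R⌋₊, 1 / ((n : ℝ) + (q + 1 : ℕ)) := by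
            rw [Finset.mul_sum]
            refine Finset.sum_congr rfl fun q _ => ?_
            rw [one_div_mul_one_div]
          have e2 : gg (n / R) / R = (1 / n) * Real.log (1 + R / n) := by
            unfold gg
            rw [one_div_div]; field_simp
          rw [e1, e2, ← mul_sub, norm_mul, Real.norm_of_nonneg (by positivity), Real.norm_eq_abs]
          have h3 : |∑ q ∈ Finset.range ⌊R⌋₊, 1 / ((n : ℝ) + (q + 1 : ℕ)) - Real.log (1 + R / n)| ≤ 1 / n := by
            have : 0 < 1 / (n : ℝ) := by positivity
            rw [abs_le]; constructor <;> linarith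
          calc _ ≤ (1 / (n : ℝ)) * (1 / n) := by gcongr
            _ ≤ (1 / R) * (1 / R) := by gcongr
            _ = _ := by field_simp
      _ ≤ (b * R + 1) * (1 / R ^ 2) := by
          rw [Finset.sum_const, nsmul_eq_mul]
          gcongr
          exact card_nset_le a b R hb.le (by linarith)
      _ ≤ _ := by
          rw [mul_one_div, mul_one_div, div_le_div_iff₀ (by positivity) (by positivity)]
          nlinarith
  simpa using hz.add hS

lemma AA_nonneg (a b R : ℝ) : 0 ≤ AA a b R := by
  unfold AA
  positivity

lemma AA_le {a b R : ℝ} (ha : 1 < a) (hb : 0 ≤ b) (hR : 0 < R) : AA a b R ≤ b + 1 := by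
  rcases lt_or_ge R 1 with h | h
  · have : ⌊R⌋₊ = 0 := Nat.floor_eq_zero.2 h
    simp [AA, this]; linarith
  unfold AA
  calc _ ≤ ∑ n ∈ nset a b R, ∑ q ∈ Finset.range ⌊R⌋₊, 1 / R ^ 2 :=
        Finset.sum_le_sum fun n hn => Finset.sum_le_sum fun q _ => weight_le ha h hn (q + 1)
    _ = (nset a b R).card * (⌊R⌋₊ * (1 / R ^ 2)) := by simp
    _ ≤ (b * R + 1) * (R * (1 / R ^ 2)) := by
        gcongr
        · exact card_nset_le a b R hb hR.le
        · exact Nat.floor_le hR.le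
    _ = (b * R + 1) / R := by field_simp
    _ ≤ _ := by rw [div_le_iff₀ hR]; nlinarith

end Kl


namespace Kl

/-- coprime double sum -/
noncomputable def WW (a b R : ℝ) : ℝ :=
  ∑ n ∈ nset a b R, ∑ q ∈ qset R n, 1 / ((n : ℝ) * (n + q))

lemma AA_dilate {a b R : ℝ} (ha : 0 < a) (hR : 0 < R) {d : ℕ} (hd : 0 < d) :
    ∑ n ∈ nset a b R, ∑ q ∈ Finset.Icc 1 ⌊R⌋₊,
      (if d ∣ n ∧ d ∣ q then 1 / ((n : ℝ) * (n + q)) else 0) = 1 / (d : ℝ) ^ 2 * AA a b (R / d) := by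
  have hd' : (0 : ℝ) < d := by exact_mod_cast hd
  rw [AA, ← Finset.sum_product', ← Finset.sum_product', ← Finset.sum_filter, Finset.mul_sum]
  symm
  refine Finset.sum_bij' (fun x _ => (d * x.1, d * (x.2 + 1))) (fun x _ => (x.1 / d, x.2 / d - 1)) ?_ ?_ ?_ ?_ ?_
  · rintro ⟨m, k⟩ h
    simp only [Finset.mem_product, Finset.mem_range, mem_nset ha.le (div_pos hR hd').le, Finset.mem_filter,
      mem_nset ha.le hR.le, Finset.mem_Icc, dvd_mul_right, and_self, and_true] at h ⊢
    obtain ⟨⟨h1, h2⟩, h3⟩ := h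
    refine ⟨⟨?_, ?_⟩, ?_, ?_⟩
    · rw [← mul_div_assoc, div_lt_iff₀ hd'] at h1
      push_cast; linarith
    · rw [← mul_div_assoc, lt_div_iff₀ hd'] at h2
      push_cast; linarith
    · exact Nat.mul_pos hd (Nat.succ_pos _)
    · rw [Nat.le_floor_iff hR.le]
      have : k + 1 ≤ ⌊R / d⌋₊ := h3
      rw [Nat.le_floor_iff (div_pos hR hd').le, le_div_iff₀ hd'] at this
      push_cast at this ⊢; linarith
  · rintro ⟨n, q⟩ h
    simp only [Finset.mem_product, Finset.mem_range, mem_nset ha.le (div_pos hR hd').le, Finset.mem_filter,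
      mem_nset ha.le hR.le, Finset.mem_Icc] at h ⊢
    obtain ⟨⟨⟨h1, h2⟩, h3, h4⟩, ⟨m, rfl⟩, ⟨k, rfl⟩⟩ := h
    rw [Nat.mul_div_cancel_left _ hd, Nat.mul_div_cancel_left _ hd]
    have hk : 0 < k := by
      rcases Nat.eq_zero_or_pos k with rfl | h
      · simp at h3
      · exact h
    push_cast at h1 h2
    refine ⟨⟨?_, ?_⟩, ?_⟩
    · rw [← mul_div_assoc, div_lt_iff₀ hd']; linarith
    · rw [← mul_div_assoc, lt_div_iff₀ hd']; linarith
    · have : k ≤ ⌊R / d⌋₊ := by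
        rw [Nat.le_floor_iff hR.le] at h4
        rw [Nat.le_floor_iff (div_pos hR hd').le, le_div_iff₀ hd']
        push_cast at h4; linarith
      omega
  · rintro ⟨m, k⟩ h
    simp [Nat.mul_div_cancel_left _ hd]
  · rintro ⟨n, q⟩ h
    simp only [Finset.mem_filter, Finset.mem_product, Finset.mem_Icc] at h
    obtain ⟨⟨_, h3, h4⟩, ⟨m, rfl⟩, ⟨k, rfl⟩⟩ := h
    have hk : 0 < k := by
      rcases Nat.eq_zero_or_pos k with rfl | h
      · simp at h3
      · exact h
    simp only [Nat.mul_div_cancel_left _ hd]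
    rw [Nat.sub_add_cancel hk]
  · rintro ⟨m, k⟩ h
    rw [one_div_mul_one_div]
    congr 1
    push_cast; ring

lemma moebius_ind (n q N : ℕ) (hq : 0 < q) (hN : q ≤ N) :
    (if q.Coprime n then (1 : ℝ) else 0) =
      ∑ d ∈ Finset.Icc 1 N, if d ∣ n ∧ d ∣ q then (ArithmeticFunction.moebius d : ℝ) else 0 := by
  have h : ((ArithmeticFunction.moebius * (ArithmeticFunction.zeta : ArithmeticFunction ℤ) : ArithmeticFunction ℤ)) (q.gcd n) = (1 : ArithmeticFunction ℤ) (q.gcd n) := by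
    rw [ArithmeticFunction.moebius_mul_coe_zeta]
  rw [ArithmeticFunction.coe_mul_zeta_apply, ArithmeticFunction.one_apply] at h
  have h2 : (∑ d ∈ (q.gcd n).divisors, (ArithmeticFunction.moebius d : ℝ)) = if q.gcd n = 1 then 1 else 0 := by
    have := congrArg (fun z : ℤ => (z : ℝ)) h
    push_cast at this
    exact this
  rw [← Finset.sum_filter]
  have h3 : (Finset.Icc 1 N).filter (fun d => d ∣ n ∧ d ∣ q) = (q.gcd n).divisors := by
    ext d
    simp only [Finset.mem_filter, Finset.mem_Icc, Nat.mem_divisors, Nat.dvd_gcd_iff]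
    constructor
    · rintro ⟨_, h1, h2⟩
      exact ⟨⟨h2, h1⟩, (Nat.gcd_pos_of_pos_left _ hq).ne'⟩
    · rintro ⟨⟨h2, h1⟩, _⟩
      exact ⟨⟨Nat.pos_of_dvd_of_pos h2 hq, (Nat.le_of_dvd hq h2).trans hN⟩, h1, h2⟩
  rw [h3, h2]

lemma WW_eq {a b R : ℝ} (ha : 1 < a) (hR : 1 ≤ R) :
    WW a b R = ∑' d : ℕ, (ArithmeticFunction.moebius d : ℝ) / (d : ℝ) ^ 2 * AA a b (R / d) := by
  have hR0 : 0 < R := by linarith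
  rw [tsum_eq_sum (s := Finset.Icc 1 ⌊R⌋₊)]
  · have : ∀ d ∈ Finset.Icc 1 ⌊R⌋₊, (ArithmeticFunction.moebius d : ℝ) / (d : ℝ) ^ 2 * AA a b (R / d)
      = ∑ n ∈ nset a b R, ∑ q ∈ Finset.Icc 1 ⌊R⌋₊, (if d ∣ n ∧ d ∣ q then (ArithmeticFunction.moebius d : ℝ) else 0) * (1 / ((n : ℝ) * (n + q))) := by
      intro d hd
      rw [Finset.mem_Icc] at hd
      rw [div_eq_mul_one_div, mul_assoc, ← AA_dilate (by linarith) hR0 hd.1, Finset.mul_sum]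
      refine Finset.sum_congr rfl fun n _ => ?_
      rw [Finset.mul_sum]
      refine Finset.sum_congr rfl fun q _ => ?_
      split_ifs <;> simp
    rw [Finset.sum_congr rfl this, Finset.sum_comm, WW]
    refine Finset.sum_congr rfl fun n hn => ?_
    rw [Finset.sum_comm]
    have hn1 : n ≠ 1 := by
      rw [mem_nset (by linarith) hR0.le] at hn
      rintro rfl
      push_cast at hn
      nlinarith [hn.1]
    have hq : qset R n = (Finset.Icc 1 ⌊R⌋₊).filter (fun q => q.Coprime n) := by
      ext q
      simp only [qset, Finset.mem_filter, Finset.mem_range, Finset.mem_Icc]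
      constructor
      · rintro ⟨h1, h2⟩
        refine ⟨⟨?_, by omega⟩, h2⟩
        rcases Nat.eq_zero_or_pos q with rfl | h
        · rw [Nat.coprime_zero_left] at h2; exact absurd h2 hn1
        · exact h
      · rintro ⟨h1, h2⟩
        exact ⟨by omega, h2⟩
    rw [hq, Finset.sum_filter]
    refine Finset.sum_congr rfl fun q hq => ?_
    rw [Finset.mem_Icc] at hq
    rw [← Finset.sum_mul, ← moebius_ind n q _ hq.1 hq.2]
    split_ifs <;> simp
  · intro d hd
    rcases Nat.eq_zero_or_pos d with rfl | h0
    · simp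
    have hd0 : (0 : ℝ) < d := by exact_mod_cast h0
    have : ⌊R / d⌋₊ = 0 := by
      rw [Nat.floor_eq_zero, div_lt_one hd0]
      simp only [Finset.mem_Icc, not_and, not_le] at hd
      exact (Nat.floor_lt hR0.le).1 (hd h0)
    simp [AA, this]

lemma sum_moebius : ∑' d : ℕ, (ArithmeticFunction.moebius d : ℝ) / (d : ℝ) ^ 2 = 6 / Real.pi ^ 2 := by
  have h := ArithmeticFunction.LSeries_zeta_mul_Lseries_moebius (s := 2) (by norm_num)
  rw [ArithmeticFunction.LSeries_zeta_eq_riemannZeta (by norm_num), riemannZeta_two] at h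
  have h2 : LSeries (fun n => (ArithmeticFunction.moebius n : ℂ)) 2 = ((∑' d : ℕ, (ArithmeticFunction.moebius d : ℝ) / (d : ℝ) ^ 2 : ℝ) : ℂ) := by
    rw [LSeries, Complex.ofReal_tsum]
    refine tsum_congr fun n => ?_
    rcases Nat.eq_zero_or_pos n with rfl | h0
    · simp
    rw [LSeries.term_of_ne_zero h0.ne']
    push_cast
    norm_num
  rw [h2] at h
  have h3 : Real.pi ^ 2 / 6 * ∑' d : ℕ, (ArithmeticFunction.moebius d : ℝ) / (d : ℝ) ^ 2 = 1 := by
    exact_mod_cast h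
  have := Real.pi_pos
  field_simp at h3 ⊢
  linarith

lemma WW_tendsto {a b : ℝ} (ha : 1 < a) (hab : a < b) :
    Tendsto (fun R : ℝ => WW a b R) atTop (𝓝 (6 / Real.pi ^ 2 * ∫ t in a..b, gg t)) := by
  rw [← sum_moebius, ← tsum_mul_right]
  have key : Tendsto (fun R : ℝ => ∑' d : ℕ, (ArithmeticFunction.moebius d : ℝ) / (d : ℝ) ^ 2 * AA a b (R / d)) atTop
      (𝓝 (∑' d : ℕ, (ArithmeticFunction.moebius d : ℝ) / (d : ℝ) ^ 2 * ∫ t in a..b, gg t)) := by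
    refine tendsto_tsum_of_dominated_convergence (bound := fun d : ℕ => 1 / (d : ℝ) ^ 2 * (b + 1)) ?_ ?_ ?_
    · exact (Real.summable_one_div_nat_pow.2 (by norm_num)).mul_right _
    · intro d
      rcases Nat.eq_zero_or_pos d with rfl | h0
      · simp
      have hd0 : (0 : ℝ) < d := by exact_mod_cast h0
      exact ((AA_tendsto ha hab).comp (tendsto_id.atTop_div_const hd0)).const_mul _
    · filter_upwards [eventually_ge_atTop 1] with R hR d
      rcases Nat.eq_zero_or_pos d with rfl | h0
      · simp
      have hd0 : (0 : ℝ) < d := by exact_mod_cast h0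
      rw [norm_mul, norm_div, Real.norm_of_nonneg (AA_nonneg _ _ _), Real.norm_of_nonneg (by positivity : (0:ℝ) ≤ (d:ℝ)^2)]
      gcongr
      · exact AA_nonneg _ _ _
      · rw [Real.norm_eq_abs]
        exact_mod_cast ArithmeticFunction.abs_moebius_le_one
      · exact AA_le ha (by linarith) (by positivity)
  refine key.congr' ?_
  filter_upwards [eventually_ge_atTop 1] with R hR
  exact (WW_eq ha hR).symm

end Kl


namespace Kl

lemma mem_slice (k : ℕ) (y : ℝ) :
    y ∈ Ioc (1 / ((k : ℝ) + 2)) (1 / ((k : ℝ) + 1)) ↔ 0 < y ∧ ⌊1 / y⌋ = (k : ℤ) + 1 := by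
  constructor
  · rintro ⟨h1, h2⟩
    have hy : 0 < y := lt_trans (by positivity) h1
    refine ⟨hy, ?_⟩
    rw [Int.floor_eq_iff]
    push_cast
    rw [div_lt_iff₀ (by positivity)] at h1
    rw [le_div_iff₀ (by positivity)] at h2
    refine ⟨?_, ?_⟩
    · rw [le_div_iff₀ hy]; linarith
    · rw [div_lt_iff₀ hy]; linarith
  · rintro ⟨hy, h⟩
    rw [Int.floor_eq_iff] at h
    push_cast at h
    obtain ⟨h1, h2⟩ := h
    rw [le_div_iff₀ hy] at h1
    rw [div_lt_iff₀ hy] at h2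
    refine ⟨?_, ?_⟩
    · rw [div_lt_iff₀ (by positivity)]; linarith
    · rw [le_div_iff₀ (by positivity)]; linarith

lemma slices : Ioc (0 : ℝ) 1 = ⋃ k : ℕ, Ioc (1 / ((k : ℝ) + 2)) (1 / ((k : ℝ) + 1)) := by
  ext y
  simp only [mem_iUnion, mem_slice]
  constructor
  · rintro ⟨h1, h2⟩
    have : 1 ≤ ⌊1 / y⌋ := by
      rw [Int.le_floor, Int.cast_one, le_div_iff₀ h1]; linarith
    refine ⟨(⌊1 / y⌋ - 1).toNat, h1, ?_⟩
    omega
  · rintro ⟨k, h1, h2⟩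
    refine ⟨h1, ?_⟩
    have : 1 ≤ ⌊1 / y⌋ := by omega
    rw [Int.le_floor, Int.cast_one, le_div_iff₀ h1] at this
    linarith

lemma slices_disj : Pairwise (Function.onFun Disjoint fun k : ℕ => Ioc (1 / ((k : ℝ) + 2)) (1 / ((k : ℝ) + 1))) := by
  intro i j hij
  rw [Function.onFun, Set.disjoint_left]
  intro y h1 h2
  rw [mem_slice] at h1 h2
  apply hij
  have := h1.2.symm.trans h2.2
  omega

lemma units : Ici (1 : ℝ) = ⋃ k : ℕ, Ico ((k : ℝ) + 1) ((k : ℝ) + 2) := by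
  ext y
  simp only [mem_iUnion, mem_Ici, mem_Ico]
  constructor
  · intro h
    have h1 : 1 ≤ ⌊y⌋₊ := by rwa [Nat.one_le_floor_iff]
    refine ⟨⌊y⌋₊ - 1, ?_, ?_⟩
    · rw [Nat.cast_sub h1]
      have := Nat.floor_le (by linarith : 0 ≤ y)
      push_cast; linarith
    · rw [Nat.cast_sub h1]
      have := Nat.lt_floor_add_one y
      push_cast; linarith
  · rintro ⟨k, h1, h2⟩
    have : (0 : ℝ) ≤ k := by positivity
    linarith

lemma units_disj : Pairwise (Function.onFun Disjoint fun k : ℕ => Ico ((k : ℝ) + 1) ((k : ℝ) + 2)) := by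
  intro i j hij
  rw [Function.onFun, Set.disjoint_left]
  intro y h1 h2
  apply hij
  have a1 : (i : ℝ) < j + 1 := by linarith [h1.1, h2.2]
  have a2 : (j : ℝ) < i + 1 := by linarith [h2.1, h1.2]
  have a1 : i < j + 1 := by exact_mod_cast a1
  have a2 : j < i + 1 := by exact_mod_cast a2
  omega

lemma rho_slice (x : ℝ) (hx : x ∈ Ioo (0 : ℝ) 1) (k : ℕ) :
    ∫⁻ y in Ioc (1 / ((k : ℝ) + 2)) (1 / ((k : ℝ) + 1)), ENNReal.ofReal (1 / (Real.log 2 * (1 + x * y) ^ 2))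
      = ENNReal.ofReal (1 / (Real.log 2 * (((k : ℝ) + 1 + x) * ((k : ℝ) + 1 + x + 1)))) := by
  have hl : 0 < Real.log 2 := Real.log_pos (by norm_num)
  have hle : 1 / ((k : ℝ) + 2) ≤ 1 / ((k : ℝ) + 1) := by gcongr; norm_num
  have hx0 : 0 < x := hx.1
  have hpos : ∀ y ∈ Icc (1 / ((k : ℝ) + 2)) (1 / ((k : ℝ) + 1)), 0 < 1 + x * y := by
    intro y hy
    have : 0 ≤ y := le_trans (by positivity) hy.1
    positivity
  have hcont : ContinuousOn (fun y : ℝ => 1 / (Real.log 2 * (1 + x * y) ^ 2)) (uIcc (1 / ((k : ℝ) + 2)) (1 / ((k : ℝ) + 1))) := by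
    rw [uIcc_of_le hle]
    apply ContinuousOn.div continuousOn_const (by fun_prop)
    intro y hy
    have := hpos y hy
    positivity
  have hIntg := hcont.intervalIntegrable (μ := volume)
  rw [← ofReal_integral_eq_lintegral_ofReal, ← intervalIntegral.integral_of_le hle]
  · congr 1
    rw [intervalIntegral.integral_eq_sub_of_hasDerivAt (f := fun y => (1 / Real.log 2) * (y / (1 + x * y)))]
    · field_simp
      ring
    · intro y hy
      rw [uIcc_of_le hle] at hy
      have h0 := hpos y hy
      have h1 : HasDerivAt (fun y : ℝ => 1 + x * y) x y := by
        simpa using ((hasDerivAt_id y).const_mul x).const_add 1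
      have h2 : HasDerivAt (fun y => (1 / Real.log 2) * (y / (1 + x * y)))
          (1 / Real.log 2 * ((1 * (1 + x * y) - y * x) / (1 + x * y) ^ 2)) y :=
        (((hasDerivAt_id y).div h1 h0.ne').const_mul (1 / Real.log 2))
      refine h2.congr_deriv ?_
      field_simp
      ring
    · exact hIntg
  · exact (intervalIntegrable_iff_integrableOn_Ioc_of_le hle).1 hIntg
  · exact ae_of_all _ fun y => by positivity

lemma Dset_ae : Dset =ᵐ[volume] (Ioo (0 : ℝ) 1 ×ˢ Ioo (0 : ℝ) 1) := by
  have h1 : ((Ioo (0 : ℝ) 1 ∩ {x | Irrational x} : Set ℝ)) =ᵐ[volume] Ioo (0 : ℝ) 1 := by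
    have : ∀ᵐ x : ℝ, Irrational x := by
      rw [ae_iff]
      have : {x : ℝ | ¬ Irrational x} = range ((↑) : ℚ → ℝ) := by
        ext x; simp [Irrational]
      rw [this]
      exact (countable_range _).measure_zero _
    filter_upwards [this] with x hx
    apply propext
    exact ⟨fun h => h.1, fun h => ⟨h, hx⟩⟩
  have h2 : Dset = (Ioo (0 : ℝ) 1 ∩ {x | Irrational x}) ×ˢ (Ioo (0 : ℝ) 1 ∩ {x | Irrational x}) := by
    ext p
    simp only [Dset, mem_ofPred_eq, mem_prod, mem_inter_iff]
    tauto
  rw [h2]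
  exact Measure.set_prod_ae_eq h1 h1

lemma roof_meas : Measurable roof := by
  unfold roof
  have : Measurable (fun p : ℝ × ℝ => ((⌊1 / p.2⌋ : ℤ) : ℝ)) :=
    (measurable_from_top (f := fun z : ℤ => (z : ℝ))).comp (Int.measurable_floor.comp (measurable_const.div measurable_snd))
  exact Real.measurable_log.comp (this.add measurable_fst)

noncomputable def nu : Measure ℝ :=
  (volume.restrict (Ici (1 : ℝ))).withDensity fun s => ENNReal.ofReal (1 / (Real.log 2 * (s * (s + 1))))

lemma lint_roof (g : ℝ → ENNReal) (hg : Measurable g) :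
    ∫⁻ p, g (roof p) ∂mu2 = ∫⁻ s, g (Real.log s) ∂nu := by
  have hgl : Measurable (fun s : ℝ => g (Real.log s)) := hg.comp Real.measurable_log
  have hd : Measurable (fun s : ℝ => ENNReal.ofReal (1 / (Real.log 2 * (s * (s + 1))))) := by fun_prop
  have hd2 : Measurable (fun p : ℝ × ℝ => ENNReal.ofReal (1 / (Real.log 2 * (1 + p.1 * p.2) ^ 2))) := by fun_prop
  have hgr : Measurable (fun p => g (roof p)) := hg.comp roof_meas
  rw [mu2, nu, lintegral_withDensity_eq_lintegral_mul _ hd hgl, lintegral_withDensity_eq_lintegral_mul _ hd2 hgr]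
  rw [Measure.restrict_congr_set Dset_ae, Measure.volume_eq_prod, ← Measure.prod_restrict,
    lintegral_prod _ (hd2.mul hgr).aemeasurable]
  rw [units, lintegral_iUnion (fun k => measurableSet_Ico) units_disj]
  simp only [Pi.mul_apply]
  have hstep : ∀ x ∈ Ioo (0 : ℝ) 1, ∫⁻ y in Ioo (0 : ℝ) 1, ENNReal.ofReal (1 / (Real.log 2 * (1 + x * y) ^ 2)) * g (roof (x, y))
      = ∑' k : ℕ, ENNReal.ofReal (1 / (Real.log 2 * (((k : ℝ) + 1 + x) * ((k : ℝ) + 1 + x + 1)))) * g (Real.log ((k : ℝ) + 1 + x)) := by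
    intro x hx
    rw [Measure.restrict_congr_set Ioo_ae_eq_Ioc, slices, lintegral_iUnion (fun k => measurableSet_Ioc) slices_disj]
    refine tsum_congr fun k => ?_
    rw [← rho_slice x hx k, ← lintegral_mul_const _ (by fun_prop)]
    refine setLIntegral_congr_fun measurableSet_Ioc fun y hy => ?_
    rw [mem_slice] at hy
    simp only [roof]
    rw [hy.2]
    push_cast
    rfl
  rw [setLIntegral_congr_fun measurableSet_Ioo hstep]
  rw [lintegral_tsum]
  · refine tsum_congr fun k => ?_
    rw [Measure.restrict_congr_set Ioo_ae_eq_Ico]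
    have hmp := measurePreserving_add_left (volume : Measure ℝ) ((k : ℝ) + 1)
    have := hmp.setLIntegral_comp_preimage (s := Ico ((k : ℝ) + 1) ((k : ℝ) + 2)) measurableSet_Ico (hd.mul hgl)
    simp only [Pi.mul_apply] at this
    rw [← this]
    congr 2
    ext y
    simp only [mem_Ico, mem_preimage]
    constructor <;> rintro ⟨h1, h2⟩ <;> constructor <;> linarith
  · intro k
    have hk : Measurable (fun x : ℝ => (k : ℝ) + 1 + x) := by fun_prop
    exact ((hd.comp hk).mul (hgl.comp hk)).aemeasurable

lemma map_roof : Measure.map roof mu2 = Measure.map Real.log nu := by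
  ext s hs
  have := lint_roof (s.indicator 1) (measurable_one.indicator hs)
  rw [← lintegral_indicator_one hs, ← lintegral_indicator_one hs,
    lintegral_map (measurable_one.indicator hs) roof_meas,
    lintegral_map (measurable_one.indicator hs) Real.measurable_log]
  exact this

lemma int_roof (g : ℝ → ℝ) (hg : Measurable g) :
    ∫ p, g (roof p) ∂mu2 = (Real.log 2)⁻¹ * ∫ s in Ioi (1 : ℝ), (s * (s + 1))⁻¹ * g (Real.log s) := by
  rw [← integral_map roof_meas.aemeasurable hg.aestronglyMeasurable, map_roof,
    integral_map Real.measurable_log.aemeasurable hg.aestronglyMeasurable, nu]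
  have hl : 0 < Real.log 2 := Real.log_pos (by norm_num)
  rw [integral_withDensity_eq_integral_toReal_smul (by fun_prop) (ae_of_all _ fun _ => ENNReal.ofReal_lt_top),
    ← integral_const_mul, integral_Ici_eq_integral_Ioi]
  refine setIntegral_congr_fun measurableSet_Ioi fun s hs => ?_
  have hs : 1 < s := hs
  simp only [smul_eq_mul]
  rw [ENNReal.toReal_ofReal (by positivity)]
  field_simp

end Kl


namespace Kl

lemma tail_deriv {s : ℝ} (hs : 0 < s) :
    HasDerivAt (fun s : ℝ => -Real.log (1 + 1 / s)) ((s * (s + 1))⁻¹) s := by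
  have h1 : HasDerivAt (fun s : ℝ => 1 + 1 / s) (-(1 / s ^ 2)) s := by
    have := (hasDerivAt_inv hs.ne').const_add 1
    simpa [one_div] using this
  have h2 := (h1.log (by positivity)).neg
  refine h2.congr_deriv ?_
  field_simp
  try ring

lemma tail_tendsto : Tendsto (fun s : ℝ => -Real.log (1 + 1 / s)) atTop (𝓝 0) := by
  have h1 : Tendsto (fun s : ℝ => 1 + 1 / s) atTop (𝓝 (1 + 0)) :=
    tendsto_const_nhds.add (tendsto_inv_atTop_zero.congr fun x => (one_div x).symm)
  have := (h1.log (by norm_num)).neg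
  simpa using this

lemma second_int {a b : ℝ} (ha : 1 < a) (hab : a < b) :
    ∫ p, (max 0 (roof p - Real.log a) - max 0 (roof p - Real.log b)) ∂mu2
      = (Real.log 2)⁻¹ * ∫ t in a..b, gg t := by
  rw [int_roof (fun u => max 0 (u - Real.log a) - max 0 (u - Real.log b)) (by fun_prop)]
  congr 1
  have hb : 1 < b := ha.trans hab
  set H : ℝ → ℝ := fun s => (s * (s + 1))⁻¹ * (max 0 (Real.log s - Real.log a) - max 0 (Real.log s - Real.log b)) with hH
  have e1 : EqOn H (fun _ => 0) (Ioc 1 a) := by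
    intro s hs
    have h1 : Real.log s ≤ Real.log a := Real.log_le_log (by linarith [hs.1]) hs.2
    have h2 : Real.log s ≤ Real.log b := h1.trans (Real.log_le_log (by linarith) hab.le)
    simp only [hH]
    rw [max_eq_left (by linarith), max_eq_left (by linarith)]
    simp
  have e2 : EqOn H (fun s => (s * (s + 1))⁻¹ * (Real.log s - Real.log a)) (Ioc a b) := by
    intro s hs
    have h1 : Real.log a ≤ Real.log s := Real.log_le_log (by linarith) hs.1.le
    have h2 : Real.log s ≤ Real.log b := Real.log_le_log (by linarith [hs.1]) hs.2
    simp only [hH]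
    rw [max_eq_right (by linarith), max_eq_left (by linarith)]
    simp
  have e3 : EqOn H (fun s => (s * (s + 1))⁻¹ * (Real.log b - Real.log a)) (Ioi b) := by
    intro s hs
    have hs : b < s := hs
    have h1 : Real.log b ≤ Real.log s := Real.log_le_log (by linarith) hs.le
    have h2 : Real.log a ≤ Real.log b := Real.log_le_log (by linarith) hab.le
    simp only [hH]
    rw [max_eq_right (by linarith), max_eq_right (by linarith)]
    ring
  have i3 : IntegrableOn (fun s : ℝ => (s * (s + 1))⁻¹) (Ioi b) := by
    refine integrableOn_Ioi_deriv_of_nonneg' (g := fun s : ℝ => -Real.log (1 + 1 / s)) (l := 0) ?_ ?_ tail_tendsto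
    · intro s hs; exact tail_deriv (by linarith [show b ≤ s from hs])
    · intro s hs
      have : 0 < s := by linarith [show b < s from hs]
      positivity
  have v3 : ∫ s in Ioi b, (s * (s + 1))⁻¹ = Real.log (1 + 1 / b) := by
    rw [integral_Ioi_of_hasDerivAt_of_tendsto' (f := fun s : ℝ => -Real.log (1 + 1 / s)) (m := 0) ?_ i3 tail_tendsto]
    · ring
    · intro s hs; exact tail_deriv (by linarith [show b ≤ s from hs])
  have c2 : ContinuousOn (fun s : ℝ => (s * (s + 1))⁻¹ * (Real.log s - Real.log a)) (uIcc a b) := by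
    rw [uIcc_of_le hab.le]
    apply ContinuousOn.mul
    · apply ContinuousOn.inv₀ (by fun_prop)
      intro s hs
      have : 0 < s := by linarith [hs.1]
      positivity
    · apply ContinuousOn.sub _ continuousOn_const
      apply Real.continuousOn_log.mono
      intro s hs
      have : 0 < s := by linarith [hs.1]
      exact this.ne'
  have i2 := c2.intervalIntegrable (μ := volume)
  have ig : IntervalIntegrable gg volume a b := gg_ii (by linarith) (by linarith)
  have v2 : ∫ s in a..b, (s * (s + 1))⁻¹ * (Real.log s - Real.log a)
      = (∫ t in a..b, gg t) - (Real.log b - Real.log a) * Real.log (1 + 1 / b) := by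
    have := intervalIntegral.integral_eq_sub_of_hasDerivAt (a := a) (b := b)
      (f := fun s => (Real.log s - Real.log a) * (-Real.log (1 + 1 / s)))
      (f' := fun s => (s * (s + 1))⁻¹ * (Real.log s - Real.log a) - gg s) ?_ (i2.sub ig)
    · rw [intervalIntegral.integral_sub i2 ig] at this
      simp only [sub_self, zero_mul, sub_zero] at this
      linarith
    · intro s hs
      rw [uIcc_of_le hab.le] at hs
      have hs0 : 0 < s := by linarith [hs.1]
      have h := ((Real.hasDerivAt_log hs0.ne').sub_const (Real.log a)).mul (tail_deriv hs0)
      refine h.congr_deriv ?_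
      simp only [gg]
      field_simp
      ring
  have I1 : IntegrableOn H (Ioc 1 a) := (integrableOn_congr_fun e1 measurableSet_Ioc).2 (by simp)
  have I2 : IntegrableOn H (Ioc a b) := (integrableOn_congr_fun e2 measurableSet_Ioc).2
    ((intervalIntegrable_iff_integrableOn_Ioc_of_le hab.le).1 i2)
  have I3 : IntegrableOn H (Ioi b) := (integrableOn_congr_fun e3 measurableSet_Ioi).2 (i3.mul_const _)
  have hu2 : Ioi a = Ioc a b ∪ Ioi b := (Ioc_union_Ioi_eq_Ioi hab.le).symm
  have hu1 : Ioi (1:ℝ) = Ioc 1 a ∪ Ioi a := (Ioc_union_Ioi_eq_Ioi ha.le).symm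
  have I23 : IntegrableOn H (Ioi a) := by rw [hu2]; exact I2.union I3
  have d1 : Disjoint (Ioc 1 a) (Ioi a) := Set.disjoint_left.2 fun x h1 h2 => not_lt.2 h1.2 h2
  have d2 : Disjoint (Ioc a b) (Ioi b) := Set.disjoint_left.2 fun x h1 h2 => not_lt.2 h1.2 h2
  rw [hu1, setIntegral_union d1 measurableSet_Ioi I1 I23, hu2, setIntegral_union d2 measurableSet_Ioi I2 I3,
    setIntegral_congr_fun measurableSet_Ioc e1, setIntegral_congr_fun measurableSet_Ioc e2,
    setIntegral_congr_fun measurableSet_Ioi e3, integral_mul_const, v3,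
    ← intervalIntegral.integral_of_le hab.le, v2]
  simp
  ring

lemma logpow_deriv (k : ℕ) (hk : 0 < k) {s : ℝ} (hs : 0 < s) :
    HasDerivAt (fun s : ℝ => -((s ^ k)⁻¹ * (Real.log s / k + 1 / (k : ℝ) ^ 2))) ((s ^ (k + 1))⁻¹ * Real.log s) s := by
  have hk' : (0 : ℝ) < k := by exact_mod_cast hk
  have h1 : HasDerivAt (fun s : ℝ => (s ^ k)⁻¹) (-(k * s ^ (k - 1)) / (s ^ k) ^ 2) s :=
    (hasDerivAt_pow k s).inv (by positivity)
  have h2 : HasDerivAt (fun s : ℝ => Real.log s / k + 1 / (k : ℝ) ^ 2) (s⁻¹ / k) s :=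
    ((Real.hasDerivAt_log hs.ne').div_const _).add_const _
  have h := (h1.mul h2).neg
  refine h.congr_deriv ?_
  obtain ⟨m, rfl⟩ : ∃ m, k = m + 1 := ⟨k - 1, by omega⟩
  simp only [Nat.add_sub_cancel]
  field_simp
  ring

lemma logpow_tendsto (k : ℕ) (hk : 0 < k) :
    Tendsto (fun s : ℝ => -((s ^ k)⁻¹ * (Real.log s / k + 1 / (k : ℝ) ^ 2))) atTop (𝓝 0) := by
  have hk' : (0 : ℝ) < k := by exact_mod_cast hk
  have h1 : Tendsto (fun s : ℝ => Real.log s / s ^ k) atTop (𝓝 0) := by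
    have := (isLittleO_log_rpow_atTop hk').tendsto_div_nhds_zero
    simpa [Real.rpow_natCast] using this
  have h2 : Tendsto (fun s : ℝ => (s ^ k)⁻¹) atTop (𝓝 0) :=
    tendsto_inv_atTop_zero.comp (tendsto_pow_atTop hk.ne')
  have h3 := ((h1.mul_const (1 / (k : ℝ))).add (h2.mul_const (1 / (k : ℝ) ^ 2))).neg
  simp only [zero_mul, add_zero, neg_zero] at h3
  refine h3.congr fun s => ?_
  ring

lemma logpow_int (k : ℕ) (hk : 0 < k) :
    IntegrableOn (fun s : ℝ => (s ^ (k + 1))⁻¹ * Real.log s) (Ioi 1) ∧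
    ∫ s in Ioi (1 : ℝ), (s ^ (k + 1))⁻¹ * Real.log s = 1 / (k : ℝ) ^ 2 := by
  have hd : ∀ s ∈ Ici (1 : ℝ), HasDerivAt (fun s : ℝ => -((s ^ k)⁻¹ * (Real.log s / k + 1 / (k : ℝ) ^ 2))) ((s ^ (k + 1))⁻¹ * Real.log s) s :=
    fun s hs => logpow_deriv k hk (by linarith [show (1 : ℝ) ≤ s from hs])
  have hi : IntegrableOn (fun s : ℝ => (s ^ (k + 1))⁻¹ * Real.log s) (Ioi 1) := by
    refine integrableOn_Ioi_deriv_of_nonneg' hd ?_ (logpow_tendsto k hk)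
    intro s hs
    have hs : 1 < s := hs
    have := Real.log_nonneg hs.le
    positivity
  refine ⟨hi, ?_⟩
  rw [integral_Ioi_of_hasDerivAt_of_tendsto' hd hi (logpow_tendsto k hk)]
  simp

lemma first_int : ∫ s in Ioi (1 : ℝ), (s * (s + 1))⁻¹ * Real.log s = Real.pi ^ 2 / 12 := by
  set F : ℕ → ℝ → ℝ := fun n s => (s ^ (2 * n + 1 + 1))⁻¹ * Real.log s - (s ^ (2 * n + 2 + 1))⁻¹ * Real.log s with hF
  have hFi : ∀ n, IntegrableOn (F n) (Ioi 1) := fun n =>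
    (logpow_int (2 * n + 1) (by omega)).1.sub (logpow_int (2 * n + 2) (by omega)).1
  have hFv : ∀ n, ∫ s in Ioi (1 : ℝ), F n s = 1 / (2 * (n : ℝ) + 1) ^ 2 - 1 / (2 * (n : ℝ) + 2) ^ 2 := by
    intro n
    rw [hF, integral_sub (logpow_int (2 * n + 1) (by omega)).1 (logpow_int (2 * n + 2) (by omega)).1,
      (logpow_int (2 * n + 1) (by omega)).2, (logpow_int (2 * n + 2) (by omega)).2]
    push_cast
    rfl
  have hFn : ∀ n, ∫ s in Ioi (1 : ℝ), ‖F n s‖ = ∫ s in Ioi (1 : ℝ), F n s := by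
    intro n
    refine setIntegral_congr_fun measurableSet_Ioi fun s hs => ?_
    have hs : 1 < s := hs
    have h1 := Real.log_nonneg hs.le
    refine Real.norm_of_nonneg ?_
    simp only [hF]
    rw [sub_nonneg]
    have : s ^ (2 * n + 1 + 1) ≤ s ^ (2 * n + 2 + 1) := pow_le_pow_right₀ hs.le (by omega)
    gcongr
  have z2 := hasSum_zeta_two
  have hodd : Summable (fun n : ℕ => 1 / (2 * (n : ℝ) + 1) ^ 2) := by
    have := z2.summable.comp_injective (i := fun n : ℕ => 2 * n + 1) (fun a b h => by simpa using h)
    refine this.congr fun n => ?_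
    simp
  have heven : HasSum (fun n : ℕ => 1 / (2 * (n : ℝ) + 2) ^ 2) (Real.pi ^ 2 / 24) := by
    have h1 : HasSum (fun n : ℕ => 1 / ((n + 1 : ℕ) : ℝ) ^ 2) (Real.pi ^ 2 / 6) := by
      have := (hasSum_nat_add_iff' 1).2 z2
      simpa using this
    have h2 := h1.mul_left (1 / 4)
    rw [show 1 / 4 * (Real.pi ^ 2 / 6) = Real.pi ^ 2 / 24 by ring] at h2
    refine h2.congr_fun ?_
    intro n
    push_cast
    field_simp
    ring
  have hoddv : HasSum (fun n : ℕ => 1 / (2 * (n : ℝ) + 1) ^ 2) (Real.pi ^ 2 / 8) := by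
    have h0 : HasSum (fun n : ℕ => 1 / ((2 * n : ℕ) : ℝ) ^ 2) (Real.pi ^ 2 / 24) := by
      have h2 := z2.mul_left (1 / 4)
      rw [show 1 / 4 * (Real.pi ^ 2 / 6) = Real.pi ^ 2 / 24 by ring] at h2
      refine h2.congr_fun ?_
      intro n
      push_cast
      rw [one_div_mul_one_div]
      ring
    have h3 : HasSum (fun n : ℕ => 1 / ((2 * n + 1 : ℕ) : ℝ) ^ 2) (∑' n : ℕ, 1 / (2 * (n : ℝ) + 1) ^ 2) := by
      refine hodd.hasSum.congr_fun ?_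
      intro n; push_cast; rfl
    have h4 := (h0.even_add_odd (f := fun n : ℕ => 1 / (n : ℝ) ^ 2) h3).unique z2
    have h5 : ∑' n : ℕ, 1 / (2 * (n : ℝ) + 1) ^ 2 = Real.pi ^ 2 / 8 := by linarith
    rw [← h5]; exact hodd.hasSum
  have hsum := hoddv.sub heven
  have key := hasSum_integral_of_summable_integral_norm (μ := volume.restrict (Ioi (1 : ℝ))) hFi (by
    simp only [hFn, hFv]; exact hsum.summable)
  simp only [hFv] at key
  have h6 := key.unique hsum
  rw [show Real.pi ^ 2 / 12 = Real.pi ^ 2 / 8 - Real.pi ^ 2 / 24 by ring, ← h6]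
  refine setIntegral_congr_fun measurableSet_Ioi fun s hs => ?_
  have hs : 1 < s := hs
  have hs0 : 0 < s := by linarith
  have hg := hasSum_geometric_of_lt_one (r := (s ^ 2)⁻¹) (by positivity) (by
    rw [inv_lt_one₀ (by positivity)]; nlinarith)
  have hg2 := (hg.mul_left (((s ^ 2)⁻¹ - (s ^ 3)⁻¹) * Real.log s)).tsum_eq
  have h7 : ∀ n, F n s = ((s ^ 2)⁻¹ - (s ^ 3)⁻¹) * Real.log s * ((s ^ 2)⁻¹) ^ n := by
    intro n
    simp only [hF]
    rw [inv_pow, ← pow_mul, pow_add, pow_add, pow_add, pow_add]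
    field_simp
  simp only [h7]
  rw [hg2]
  have : s ^ 2 - 1 ≠ 0 := by nlinarith
  field_simp
  ring

lemma rhs_eq {a b : ℝ} (ha : 1 < a) (hab : a < b) :
    (∫ p, roof p ∂mu2)⁻¹ * ∫ p, (max 0 (roof p - Real.log a) - max 0 (roof p - Real.log b)) ∂mu2
      = 2 * (6 / Real.pi ^ 2 * ∫ t in a..b, gg t) := by
  rw [second_int ha hab, int_roof (fun u => u) measurable_id, first_int]
  have hl : 0 < Real.log 2 := Real.log_pos (by norm_num)
  have := Real.pi_pos
  field_simp
  ring

end Kl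


namespace Kl

/-- The pairs behave like consecutive convergents of `α`. -/
def Cond (n q p' p : ℤ) (α : ℝ) : Prop :=
  (p' * q - p * n = 1 ∨ p' * q - p * n = -1) ∧ ((q : ℝ) * α - p) * (n * α - p') < 0 ∧
    |(n : ℝ) * α - p'| < |(q : ℝ) * α - p|

lemma best {n q p' p : ℤ} {α : ℝ} (h : Cond n q p' p α) (hq : 0 < q) {s r : ℤ} (hs : 0 < s) (hsn : s < n) :
    |(q : ℝ) * α - p| ≤ |(s : ℝ) * α - r| := by
  obtain ⟨hdet, hsgn, -⟩ := h
  obtain ⟨x, y, hx, hy⟩ : ∃ x y : ℤ, s = x * q + y * n ∧ r = x * p + y * p' := by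
    rcases hdet with h | h
    · refine ⟨s * p' - r * n, r * q - s * p, ?_, ?_⟩
      · linear_combination (-s) * h
      · linear_combination (-r) * h
    · refine ⟨-(s * p' - r * n), -(r * q - s * p), ?_, ?_⟩
      · linear_combination s * h
      · linear_combination r * h
  have e : (s : ℝ) * α - r = x * ((q : ℝ) * α - p) + y * (n * α - p') := by
    rw [hx, hy]; push_cast; ring
  rw [e]
  set D := (q : ℝ) * α - p with hD
  set E := (n : ℝ) * α - p' with hE
  rcases lt_trichotomy y 0 with h | h | h
  · have hx0 : 0 < x := by
      by_contra hc
      push Not at hc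
      nlinarith
    have hx1 : (1 : ℝ) ≤ x := by exact_mod_cast hx0
    have hy1 : (y : ℝ) < 0 := by exact_mod_cast h
    have : D ^ 2 ≤ (x * D + y * E) ^ 2 := by
      have h1 : 0 ≤ (x * y : ℝ) * (D * E) := by
        apply mul_nonneg_of_nonpos_of_nonpos _ hsgn.le
        nlinarith
      have h2 : D ^ 2 ≤ (x * D) ^ 2 := by
        rw [mul_pow]; nlinarith [sq_nonneg D, mul_self_nonneg ((x : ℝ) - 1)]
      nlinarith [sq_nonneg ((y : ℝ) * E)]
    exact sq_le_sq.1 this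
  · subst h
    have hx0 : x ≠ 0 := by rintro rfl; simp at hx; omega
    have : (1 : ℝ) ≤ |(x : ℝ)| := by
      have := Int.one_le_abs hx0
      exact_mod_cast this
    simp only [Int.cast_zero, zero_mul, add_zero, abs_mul]
    nlinarith [abs_nonneg D]
  · have hx0 : x < 0 := by
      by_contra hc
      push Not at hc
      nlinarith
    have hx1 : (x : ℝ) ≤ -1 := by exact_mod_cast (by omega : x ≤ -1)
    have hy1 : (0 : ℝ) < y := by exact_mod_cast h
    have : D ^ 2 ≤ (x * D + y * E) ^ 2 := by
      have h1 : 0 ≤ (x * y : ℝ) * (D * E) := by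
        apply mul_nonneg_of_nonpos_of_nonpos _ hsgn.le
        nlinarith
      have h2 : D ^ 2 ≤ (x * D) ^ 2 := by
        rw [mul_pow]; nlinarith [sq_nonneg D, mul_self_nonneg ((x : ℝ) + 1)]
      nlinarith [sq_nonneg ((y : ℝ) * E)]
    exact sq_le_sq.1 this

lemma irr_lin {α : ℝ} (hα : Irrational α) {s r : ℤ} (h : (s : ℝ) * α = r) : s = 0 := by
  by_contra hs
  have hs' : (s : ℝ) ≠ 0 := by exact_mod_cast hs
  apply hα
  refine ⟨(r : ℚ) / s, ?_⟩
  push_cast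
  rw [← h]
  field_simp

lemma det_pos {n q p' p : ℤ} {α : ℝ} (h : Cond n q p' p α) (hq : 0 < q) (hn : 0 < n) :
    (p' * q - p * n = 1 ∧ 0 < (q : ℝ) * α - p ∧ (n : ℝ) * α - p' < 0) ∨
    (p' * q - p * n = -1 ∧ (q : ℝ) * α - p < 0 ∧ 0 < (n : ℝ) * α - p') := by
  obtain ⟨hdet, hsgn, -⟩ := h
  have hq' : (0 : ℝ) < q := by exact_mod_cast hq
  have hn' : (0 : ℝ) < n := by exact_mod_cast hn
  rcases mul_neg_iff.1 hsgn with ⟨h1, h2⟩ | ⟨h1, h2⟩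
  · left
    refine ⟨?_, h1, h2⟩
    rcases hdet with h | h
    · exact h
    · exfalso
      have h' : (p' : ℝ) * q - p * n = -1 := by exact_mod_cast h
      nlinarith
  · right
    refine ⟨?_, h1, h2⟩
    rcases hdet with h | h
    · exfalso
      have h' : (p' : ℝ) * q - p * n = 1 := by exact_mod_cast h
      nlinarith
    · exact h

lemma uniq {n q p' p n2 q2 p2' p2 : ℤ} {α : ℝ} (hα : Irrational α) (h : Cond n q p' p α)
    (h2 : Cond n2 q2 p2' p2 α) (hq : 0 < q) (hq2 : 0 < q2) (h12 : q < n2) (h21 : q2 < n) (hqn : q < n) (hqn2 : q2 < n2) :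
    n = n2 ∧ q = q2 ∧ p' = p2' ∧ p = p2 := by
  have e : |(q : ℝ) * α - p| = |(q2 : ℝ) * α - p2| :=
    le_antisymm (best h hq hq2 h21) (best h2 hq2 hq h12)
  have hqq : q = q2 := by
    rcases abs_eq_abs.1 e with e | e
    · have := irr_lin hα (s := q - q2) (r := p - p2) (by push_cast; linarith)
      omega
    · have := irr_lin hα (s := q + q2) (r := p + p2) (by push_cast; linarith)
      omega
  subst hqq
  have hpp : p = p2 := by
    rcases abs_eq_abs.1 e with e | e
    · have : (p : ℝ) = p2 := by linarith
      exact_mod_cast this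
    · have := irr_lin hα (s := q + q) (r := p + p2) (by push_cast; linarith)
      omega
  subst hpp
  have hlt := h.2.2
  have hlt2 := h2.2.2
  have key : p' * q - p * n = p2' * q - p * n2 ∧ |((n : ℝ) * α - p') - (n2 * α - p2')| < |(q : ℝ) * α - p| := by
    rcases det_pos h hq (by omega) with ⟨a1, a2, a3⟩ | ⟨a1, a2, a3⟩ <;>
    rcases det_pos h2 hq (by omega) with ⟨b1, b2, b3⟩ | ⟨b1, b2, b3⟩
    · refine ⟨by omega, ?_⟩
      rw [abs_of_pos a2, abs_of_neg a3] at hlt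
      rw [abs_of_pos b2, abs_of_neg b3] at hlt2
      rw [abs_of_pos a2, abs_lt]
      constructor <;> linarith
    · linarith
    · linarith
    · refine ⟨by omega, ?_⟩
      rw [abs_of_neg a2, abs_of_pos a3] at hlt
      rw [abs_of_neg b2, abs_of_pos b3] at hlt2
      rw [abs_of_neg a2, abs_lt]
      constructor <;> linarith
  obtain ⟨k1, k2⟩ := key
  have hcop : IsCoprime q p := by
    rcases h.1 with h | h
    · exact ⟨p', -n, by linarith⟩
    · exact ⟨-p', n, by linarith⟩
  have hdvd : q ∣ n - n2 := by
    refine hcop.dvd_of_dvd_mul_left ⟨p' - p2', by linarith⟩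
  obtain ⟨k, hk⟩ := hdvd
  have hk2 : p' - p2' = k * p := by
    have : q * (p' - p2') = q * (k * p) := by
      linear_combination k1 + p * hk
    exact mul_left_cancel₀ hq.ne' this
  have hk0 : k = 0 := by
    by_contra hk0
    have hk3 : (n : ℝ) - n2 = q * k := by exact_mod_cast hk
    have hk4 : (p' : ℝ) - p2' = k * p := by exact_mod_cast hk2
    have : ((n : ℝ) * α - p') - (n2 * α - p2') = k * (q * α - p) := by
      linear_combination α * hk3 - hk4
    rw [this, abs_mul] at k2
    have h1 : (1 : ℝ) ≤ |(k : ℝ)| := by exact_mod_cast Int.one_le_abs hk0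
    nlinarith [abs_nonneg ((q : ℝ) * α - p)]
  subst hk0
  refine ⟨by linarith, rfl, by linarith, rfl⟩


lemma orbit {α : ℝ} (h0 : α ∈ Ioo (0 : ℝ) 1) (hi : Irrational α) (n : ℕ) :
    gaussMap^[n] α ∈ Ioo (0 : ℝ) 1 ∧ Irrational (gaussMap^[n] α) := by
  induction n with
  | zero => exact ⟨h0, hi⟩
  | succ n ih =>
    rw [Function.iterate_succ_apply']
    set x := gaussMap^[n] α
    have hix : Irrational (gaussMap x) := by
      unfold gaussMap
      rw [one_div, Int.fract]
      exact (irrational_inv_iff.2 ih.2).sub_intCast _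
    refine ⟨⟨?_, Int.fract_lt_one _⟩, hix⟩
    exact lt_of_le_of_ne (Int.fract_nonneg _) (fun h => hix ⟨0, by rw [← h]; simp⟩)

lemma orbit_step {α : ℝ} (h0 : α ∈ Ioo (0 : ℝ) 1) (hi : Irrational α) (n : ℕ) :
    1 / gaussMap^[n] α = pq α (n + 1) + gaussMap^[n + 1] α ∧ 1 ≤ pq α (n + 1) := by
  have hx := (orbit h0 hi n).1
  rw [Function.iterate_succ_apply']
  simp only [pq, Nat.add_sub_cancel]
  set x := gaussMap^[n] α
  have h1 : 1 ≤ 1 / x := by rw [le_div_iff₀ hx.1]; linarith [hx.2]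
  constructor
  · rw [gaussMap, natCast_floor_eq_intCast_floor (by linarith)]
    exact (Int.floor_add_fract _).symm
  · rwa [Nat.one_le_floor_iff]

lemma delta_step {α : ℝ} (h0 : α ∈ Ioo (0 : ℝ) 1) (hi : Irrational α) (n : ℕ) :
    (qden (pq α) (n + 1) : ℝ) * α - pnum (pq α) (n + 1) =
      -(gaussMap^[n + 1] α) * ((qden (pq α) n : ℝ) * α - pnum (pq α) n) := by
  induction n with
  | zero =>
    have := (orbit_step h0 hi 0).1
    simp only [Function.iterate_zero, id] at this
    have hα := h0.1
    simp only [qden, pnum]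
    push_cast
    rw [div_eq_iff hα.ne'] at this
    simp only [zero_add] at this ⊢
    linear_combination -this
  | succ n ih =>
    have := (orbit_step h0 hi (n + 1)).1
    have hx := (orbit h0 hi (n + 1)).1.1
    simp only [qden, pnum]
    push_cast
    rw [div_eq_iff hx.ne'] at this
    set x := gaussMap^[n + 1] α
    set d := (qden (pq α) n : ℝ) * α - pnum (pq α) n with hd
    have e : (qden (pq α) (n + 1) : ℝ) * α - pnum (pq α) (n + 1) = -x * d := ih
    show _ = -(gaussMap^[n + 1 + 1] α) * ((qden (pq α) (n + 1) : ℝ) * α - pnum (pq α) (n + 1))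
    linear_combination (pq α (n + 2) + gaussMap^[n + 1 + 1] α) * e + d * this - hd

lemma delta_ne {α : ℝ} (h0 : α ∈ Ioo (0 : ℝ) 1) (hi : Irrational α) (n : ℕ) :
    (qden (pq α) n : ℝ) * α - pnum (pq α) n ≠ 0 := by
  induction n with
  | zero => simp [qden, pnum]; exact h0.1.ne'
  | succ n ih =>
    rw [delta_step h0 hi]
    exact mul_ne_zero (neg_ne_zero.2 (orbit h0 hi _).1.1.ne') ih

lemma cf_det (b : ℕ → ℕ) (n : ℕ) :
    (pnum b (n + 1) : ℤ) * qden b n - pnum b n * qden b (n + 1) = (-1) ^ n := by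
  induction n with
  | zero => simp [pnum, qden]
  | succ n ih =>
    simp only [pnum, qden]
    push_cast
    rw [pow_succ]
    linear_combination -ih

lemma qden_bound {α : ℝ} (h0 : α ∈ Ioo (0 : ℝ) 1) (hi : Irrational α) (n : ℕ) :
    1 ≤ qden (pq α) n ∧ n ≤ qden (pq α) n ∧ n + 1 ≤ qden (pq α) (n + 1) := by
  induction n with
  | zero => simp [qden]; exact (orbit_step h0 hi 0).2
  | succ n ih =>
    obtain ⟨i1, i2, i3⟩ := ih
    refine ⟨by omega, by omega, ?_⟩
    have := (orbit_step h0 hi (n + 1)).2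
    simp only [qden]
    have h2 : 1 * qden (pq α) (n + 1) ≤ pq α (n + 2) * qden (pq α) (n + 1) := Nat.mul_le_mul_right _ this
    omega

lemma cf_cond {α : ℝ} (h0 : α ∈ Ioo (0 : ℝ) 1) (hi : Irrational α) (n : ℕ) :
    Cond (qden (pq α) (n + 1)) (qden (pq α) n) (pnum (pq α) (n + 1)) (pnum (pq α) n) α := by
  have hx := (orbit h0 hi (n + 1)).1
  have hne := delta_ne h0 hi n
  have hst := delta_step h0 hi n
  refine ⟨?_, ?_, ?_⟩
  · rw [cf_det]; exact neg_one_pow_eq_or ℤ n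
  · push_cast
    rw [hst]
    have := mul_self_pos.2 hne
    nlinarith [hx.1]
  · push_cast
    rw [hst, abs_mul, abs_neg, abs_of_pos hx.1]
    have := abs_pos.2 hne
    nlinarith [hx.2]

/-- the index `n_R` is at least one, and the two denominators straddle `R` -/
lemma nIndex_spec {α : ℝ} (h0 : α ∈ Ioo (0 : ℝ) 1) (hi : Irrational α) {R : ℝ} (hR : 1 ≤ R) :
    ∃ q p' p : ℤ, 0 < q ∧ (q : ℝ) ≤ R ∧ R < qden (pq α) (nIndex α R) ∧
      Cond (qden (pq α) (nIndex α R)) q p' p α := by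
  have hne : {n : ℕ | R < (qden (pq α) n : ℝ)}.Nonempty := by
    refine ⟨⌊R⌋₊ + 1, ?_⟩
    have h1 := (qden_bound h0 hi (⌊R⌋₊ + 1)).2.1
    have h2 := Nat.lt_floor_add_one R
    have h3 : ((⌊R⌋₊ + 1 : ℕ) : ℝ) ≤ qden (pq α) (⌊R⌋₊ + 1) := by exact_mod_cast h1
    push_cast at h3
    exact h2.trans_le h3
  have hmem : R < (qden (pq α) (nIndex α R) : ℝ) := Nat.sInf_mem hne
  have hmin : ∀ m, m < nIndex α R → (qden (pq α) m : ℝ) ≤ R := by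
    intro m hm
    have := Nat.notMem_of_lt_sInf hm
    exact not_lt.1 this
  obtain ⟨m, hm⟩ : ∃ m, nIndex α R = m + 1 := by
    rcases Nat.eq_zero_or_pos (nIndex α R) with h | h
    · rw [h] at hmem
      simp [qden] at hmem
      linarith
    · exact ⟨nIndex α R - 1, by omega⟩
  refine ⟨qden (pq α) m, pnum (pq α) (m + 1), pnum (pq α) m, ?_, ?_, hmem, ?_⟩
  · have := (qden_bound h0 hi m).1
    exact_mod_cast this
  · have := hmin m (by omega)
    exact_mod_cast this
  · rw [hm]; exact cf_cond h0 hi m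

end Kl


namespace Kl

lemma lint_gauss {c d : ℝ} (hc : 0 ≤ c) (hcd : c ≤ d) :
    ∫⁻ x in Ioo c d, ENNReal.ofReal (1 / (Real.log 2 * (1 + x)))
      = ENNReal.ofReal ((Real.log 2)⁻¹ * (Real.log (1 + d) - Real.log (1 + c))) := by
  have hl : 0 < Real.log 2 := Real.log_pos (by norm_num)
  have hcont : ContinuousOn (fun x : ℝ => 1 / (Real.log 2 * (1 + x))) (uIcc c d) := by
    rw [uIcc_of_le hcd]
    apply ContinuousOn.div continuousOn_const (by fun_prop)
    intro y hy
    have : 0 ≤ y := hc.trans hy.1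
    positivity
  have hIntg := hcont.intervalIntegrable (μ := volume)
  rw [Measure.restrict_congr_set Ioo_ae_eq_Ioc, ← ofReal_integral_eq_lintegral_ofReal,
    ← intervalIntegral.integral_of_le hcd]
  · congr 1
    rw [intervalIntegral.integral_eq_sub_of_hasDerivAt (f := fun y => (Real.log 2)⁻¹ * Real.log (1 + y)) _ hIntg]
    · ring
    · intro y hy
      rw [uIcc_of_le hcd] at hy
      have hy0 : 0 ≤ y := hc.trans hy.1
      have h1 : HasDerivAt (fun y : ℝ => 1 + y) 1 y := (hasDerivAt_id y).const_add 1
      refine ((h1.log (by positivity)).const_mul (Real.log 2)⁻¹).congr_deriv ?_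
      field_simp
  · exact (intervalIntegrable_iff_integrableOn_Ioc_of_le hcd).1 hIntg
  · filter_upwards [ae_restrict_mem measurableSet_Ioc] with y hy
    have : 0 ≤ y := hc.trans hy.1.le
    positivity

instance gauss_fin : IsFiniteMeasure gaussMeasure := by
  constructor
  rw [gaussMeasure, withDensity_apply _ MeasurableSet.univ, Measure.restrict_univ,
    lint_gauss le_rfl zero_le_one]
  exact ENNReal.ofReal_lt_top

lemma gauss_Ioo {c d : ℝ} (hc : 0 ≤ c) (hcd : c ≤ d) (hd : d ≤ 1) :
    gaussMeasure.real (Ioo c d) = (Real.log 2)⁻¹ * (Real.log (1 + d) - Real.log (1 + c)) := by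
  have hl : 0 < Real.log 2 := Real.log_pos (by norm_num)
  rw [Measure.real, gaussMeasure, withDensity_apply _ measurableSet_Ioo, Measure.restrict_restrict measurableSet_Ioo,
    inter_eq_self_of_subset_left (Ioo_subset_Ioo hc hd), lint_gauss hc hcd, ENNReal.toReal_ofReal]
  have : Real.log (1 + c) ≤ Real.log (1 + d) := Real.log_le_log (by linarith) (by linarith)
  apply mul_nonneg (by positivity); linarith

lemma gauss_irr (s : Set ℝ) : gaussMeasure.real (s ∩ {x | Irrational x}) = gaussMeasure.real s := by
  have hirr : ∀ᵐ x : ℝ, Irrational x := by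
    rw [ae_iff]
    have : {x : ℝ | ¬ Irrational x} = range ((↑) : ℚ → ℝ) := by
      ext x; simp [Irrational]
    rw [this]
    exact (countable_range _).measure_zero _
  have hac : gaussMeasure ≪ (volume : Measure ℝ) :=
    (withDensity_absolutelyContinuous _ _).trans Measure.restrict_le_self.absolutelyContinuous
  have h2 : ∀ᵐ x ∂gaussMeasure, Irrational x := hac.ae_le hirr
  apply measureReal_congr
  filter_upwards [h2] with x hx
  apply propext
  exact ⟨fun h => h.1, fun h => ⟨h, hx⟩⟩

lemma log_est {c d e : ℝ} (hc : 0 ≤ c) (hcd : c ≤ d) (he : e = c ∨ e = d) :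
    |(Real.log (1 + d) - Real.log (1 + c)) - (d - c) * (1 / (1 + e))| ≤ (d - c) ^ 2 := by
  have hd : 0 ≤ d := hc.trans hcd
  have h1 := Real.log_le_sub_one_of_pos (x := (1 + d) / (1 + c)) (by positivity)
  have h2 := Real.log_le_sub_one_of_pos (x := (1 + c) / (1 + d)) (by positivity)
  rw [Real.log_div (by positivity) (by positivity)] at h1 h2
  have e1 : (1 + d) / (1 + c) - 1 = (d - c) * (1 / (1 + c)) := by field_simp; ring
  have e2 : (1 + c) / (1 + d) - 1 = - ((d - c) * (1 / (1 + d))) := by field_simp; ring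
  rw [e1] at h1
  rw [e2] at h2
  have e3 : (d - c) * (1 / (1 + c)) - (d - c) * (1 / (1 + d)) ≤ (d - c) ^ 2 := by
    have : (d - c) * (1 / (1 + c)) - (d - c) * (1 / (1 + d)) = (d - c) ^ 2 / ((1 + c) * (1 + d)) := by
      field_simp; ring
    rw [this]
    apply div_le_self (sq_nonneg _)
    nlinarith
  have hsq := sq_nonneg (d - c)
  rcases he with rfl | rfl <;> rw [abs_le] <;> constructor <;> linarith

noncomputable def uu (n q : ℕ) : ℕ := ((q : ZMod n)⁻¹).val
noncomputable def ww (n q : ℕ) : ℝ := 1 / ((n : ℝ) * (n + q))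
noncomputable def IP (n q : ℕ) : Set ℝ := Ioo ((uu n q : ℝ) / n - ww n q) ((uu n q : ℝ) / n)
noncomputable def IM (n q : ℕ) : Set ℝ := Ioo (1 - (uu n q : ℝ) / n) (1 - (uu n q : ℝ) / n + ww n q)

lemma uu_spec {n q : ℕ} (hn : 2 ≤ n) (hc : q.Coprime n) :
    0 < uu n q ∧ uu n q < n ∧ ∃ p : ℤ, (uu n q : ℤ) * q - p * n = 1 := by
  have : NeZero n := ⟨by omega⟩
  have hlt : uu n q < n := ZMod.val_lt _
  have h1 : ((uu n q * q : ℤ) : ZMod n) = ((1 : ℤ) : ZMod n) := by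
    push_cast
    rw [uu, ZMod.natCast_val, ZMod.cast_id, mul_comm]
    exact ZMod.coe_mul_inv_eq_one q hc
  rw [ZMod.intCast_eq_intCast_iff_dvd_sub] at h1
  obtain ⟨k, hk⟩ := h1
  refine ⟨?_, hlt, -k, by linarith⟩
  rcases Nat.eq_zero_or_pos (uu n q) with h | h
  · exfalso
    rw [h] at hk
    simp at hk
    have : (n : ℤ) ∣ 1 := ⟨k, hk⟩
    have := Int.le_of_dvd one_pos this
    omega
  · exact h

lemma ww_pos {n q : ℕ} (hn : 2 ≤ n) : 0 < ww n q := by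
  have : 0 < n := by omega
  unfold ww
  positivity

lemma ww_lt {n q : ℕ} (hn : 2 ≤ n) (hq : 0 < q) : ww n q < 1 / n := by
  have hn' : (2 : ℝ) ≤ n := by exact_mod_cast hn
  have hq' : (0 : ℝ) < q := by exact_mod_cast hq
  unfold ww
  rw [div_lt_div_iff₀ (by positivity) (by positivity)]
  nlinarith

lemma uu_bounds {n q : ℕ} (hn : 2 ≤ n) (hc : q.Coprime n) :
    1 / (n : ℝ) ≤ (uu n q : ℝ) / n ∧ (uu n q : ℝ) / n ≤ 1 - 1 / n := by
  obtain ⟨h1, h2, -⟩ := uu_spec hn hc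
  have hn' : (2 : ℝ) ≤ n := by exact_mod_cast hn
  have h1' : (1 : ℝ) ≤ uu n q := by exact_mod_cast h1
  have h2' : (uu n q : ℝ) + 1 ≤ n := by exact_mod_cast h2
  constructor
  · gcongr
  · rw [div_le_iff₀ (by positivity), sub_mul, div_mul_cancel₀ _ (by positivity)]
    linarith

lemma cond_of_IP {n q : ℕ} (hn : 2 ≤ n) (hq : 0 < q) (hc : q.Coprime n) {α : ℝ} (h : α ∈ IP n q) :
    ∃ p : ℤ, (uu n q : ℤ) * q - p * n = 1 ∧ Cond n q (uu n q) p α := by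
  obtain ⟨-, -, p, hp⟩ := uu_spec hn hc
  refine ⟨p, hp, Or.inl hp, ?_⟩
  have hn' : (2 : ℝ) ≤ n := by exact_mod_cast hn
  have hq' : (0 : ℝ) < q := by exact_mod_cast hq
  have hp' : (uu n q : ℝ) * q - p * n = 1 := by exact_mod_cast hp
  obtain ⟨h1, h2⟩ := h
  push_cast
  set u : ℝ := (uu n q : ℝ)
  have h2' : (n : ℝ) * α - u < 0 := by
    rw [lt_div_iff₀ (by positivity)] at h2; linarith
  have h1' : u - (n : ℝ) * α < 1 / (n + q) := by
    have : (n : ℝ) * (u / n - ww n q) = u - 1 / (n + q) := by unfold ww; field_simp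
    have h3 : (n : ℝ) * (u / n - ww n q) < n * α := by gcongr
    linarith
  have h3 : 1 / (n + q : ℝ) < q * α - p := by
    rw [lt_div_iff₀ (by positivity)] at h1'
    rw [div_lt_iff₀ (by positivity)]
    have e : (n : ℝ) * ((q * α - p) * (n + q) - 1) = q * (1 - (u - n * α) * (n + q)) := by
      linear_combination (n + q : ℝ) * hp'
    have h5 : 0 < (n : ℝ) * ((q * α - p) * (n + q) - 1) := by
      rw [e]; apply mul_pos hq'; linarith
    have := (mul_pos_iff_of_pos_left (by linarith : (0 : ℝ) < n)).1 h5
    linarith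
  have h4 : 0 < 1 / (n + q : ℝ) := by positivity
  refine ⟨mul_neg_of_pos_of_neg (by linarith) h2', ?_⟩
  rw [abs_of_neg h2', abs_of_pos (by linarith)]
  linarith

lemma cond_of_IM {n q : ℕ} (hn : 2 ≤ n) (hq : 0 < q) (hc : q.Coprime n) {α : ℝ} (h : α ∈ IM n q) :
    ∃ p : ℤ, ((n : ℤ) - uu n q) * q - p * n = -1 ∧ Cond n q (n - uu n q) p α := by
  obtain ⟨-, -, p, hp⟩ := uu_spec hn hc
  have hp2 : ((n : ℤ) - uu n q) * q - (q - p) * n = -1 := by linear_combination -hp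
  refine ⟨q - p, hp2, Or.inr hp2, ?_⟩
  have hn' : (2 : ℝ) ≤ n := by exact_mod_cast hn
  have hq' : (0 : ℝ) < q := by exact_mod_cast hq
  have hp' : (uu n q : ℝ) * q - p * n = 1 := by exact_mod_cast hp
  obtain ⟨h1, h2⟩ := h
  push_cast
  set u : ℝ := (uu n q : ℝ)
  have h1' : 0 < (n : ℝ) * α - (n - u) := by
    have h3 : (n : ℝ) * (1 - u / n) < n * α := by gcongr
    have : (n : ℝ) * (1 - u / n) = n - u := by field_simp
    linarith
  have h2' : (n : ℝ) * α - (n - u) < 1 / (n + q) := by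
    have : (n : ℝ) * (1 - u / n + ww n q) = n - u + 1 / (n + q) := by unfold ww; field_simp
    have h3 : n * α < (n : ℝ) * (1 - u / n + ww n q) := by gcongr
    linarith
  have h3 : 1 / (n + q : ℝ) < -(q * α - (q - p)) := by
    rw [lt_div_iff₀ (by positivity)] at h2'
    rw [div_lt_iff₀ (by positivity)]
    have e : (n : ℝ) * (-(q * α - (q - p)) * (n + q) - 1) = q * (1 - (n * α - (n - u)) * (n + q)) := by
      linear_combination (n + q : ℝ) * hp'
    have h5 : 0 < (n : ℝ) * (-(q * α - (q - p)) * (n + q) - 1) := by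
      rw [e]; apply mul_pos hq'; linarith
    have := (mul_pos_iff_of_pos_left (by linarith : (0 : ℝ) < n)).1 h5
    linarith
  have h4 : 0 < 1 / (n + q : ℝ) := by positivity
  refine ⟨mul_neg_of_neg_of_pos (by linarith) h1', ?_⟩
  rw [abs_of_pos h1', abs_of_neg (by linarith)]
  linarith

lemma uu_eq {n q : ℕ} (hn : 2 ≤ n) (hc : q.Coprime n) {p' p : ℤ} (h0 : 0 < p') (h1 : p' < n)
    (h : p' * q - p * n = 1) : p' = uu n q := by
  obtain ⟨a1, a2, p2, a3⟩ := uu_spec hn hc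
  have hd : (n : ℤ) ∣ (p' - uu n q) := by
    have hcop : IsCoprime (n : ℤ) (q : ℤ) := (Nat.isCoprime_iff_coprime.2 hc).symm
    refine hcop.dvd_of_dvd_mul_right ⟨p - p2, by linarith⟩
  have := Int.eq_zero_of_abs_lt_dvd hd (by rw [abs_lt]; constructor <;> omega)
  omega

lemma mem_of_cond {n q : ℕ} (hn : 2 ≤ n) (hq : 0 < q) {p' p : ℤ} {α : ℝ} (h0 : α ∈ Ioo (0 : ℝ) 1)
    (h : Cond n q p' p α) : q.Coprime n ∧ (α ∈ IP n q ∨ α ∈ IM n q) := by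
  have hn' : (2 : ℝ) ≤ n := by exact_mod_cast hn
  have hq' : (0 : ℝ) < q := by exact_mod_cast hq
  have hc : q.Coprime n := by
    rw [← Nat.isCoprime_iff_coprime]
    rcases h.1 with h | h
    · exact ⟨p', -p, by linarith⟩
    · exact ⟨-p', p, by linarith⟩
  refine ⟨hc, ?_⟩
  have hlt := h.2.2
  have hnotdvd : ∀ k : ℤ, (n : ℤ) * k ≠ 1 := by
    intro k hk
    have := Int.le_of_dvd one_pos (⟨k, hk.symm⟩ : (n : ℤ) ∣ 1)
    omega
  have h4 : 1 / (n + q : ℝ) < 1 := by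
    rw [div_lt_one (by positivity)]; linarith
  rcases det_pos h (by exact_mod_cast hq) (by omega) with ⟨a1, a2, a3⟩ | ⟨a1, a2, a3⟩
  · left
    rw [abs_of_pos a2, abs_of_neg a3] at hlt
    push_cast at a2 a3 hlt
    have a1' : (p' : ℝ) * q - p * n = 1 := by exact_mod_cast a1
    have b1 : (p' : ℝ) - n * α < 1 / (n + q) := by
      rw [lt_div_iff₀ (by positivity)]
      have : (n : ℝ) * (-(n * α - p')) < n * (q * α - p) := by gcongr
      nlinarith
    have hp0 : 0 < p' := by
      have : (0 : ℝ) < p' := by nlinarith [h0.1]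
      exact_mod_cast this
    have hpn : p' < n := by
      have : (p' : ℝ) < n + 1 := by nlinarith [h0.2]
      have h5 : p' < n + 1 := by exact_mod_cast this
      have h6 : p' ≠ n := by
        rintro rfl
        exact hnotdvd (q - p) (by linarith)
      omega
    have hu : p' = uu n q := uu_eq hn hc hp0 hpn a1
    have hu' : (p' : ℝ) = uu n q := by exact_mod_cast hu
    rw [hu'] at b1 a3
    refine ⟨?_, ?_⟩
    · have : (n : ℝ) * ((uu n q : ℝ) / n - ww n q) = uu n q - 1 / (n + q) := by unfold ww; field_simp
      have h3 : (n : ℝ) * ((uu n q : ℝ) / n - ww n q) < n * α := by linarith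
      exact lt_of_mul_lt_mul_left h3 (by positivity)
    · rw [lt_div_iff₀ (by positivity)]; linarith
  · right
    rw [abs_of_neg a2, abs_of_pos a3] at hlt
    push_cast at a2 a3 hlt
    have a1' : (p' : ℝ) * q - p * n = -1 := by exact_mod_cast a1
    have b1 : n * α - (p' : ℝ) < 1 / (n + q) := by
      rw [lt_div_iff₀ (by positivity)]
      have : (n : ℝ) * (n * α - p') < n * (-(q * α - p)) := by gcongr
      nlinarith
    have hpn : p' < n := by
      have : (p' : ℝ) < n := by nlinarith [h0.2]
      exact_mod_cast this
    have hp0 : 0 < p' := by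
      have : (-1 : ℝ) < p' := by nlinarith [h0.1]
      have h5 : -1 < p' := by exact_mod_cast this
      have h6 : p' ≠ 0 := by
        rintro rfl
        exact hnotdvd p (by linarith)
      omega
    have hu : (n - p' : ℤ) = uu n q := uu_eq hn hc (p := q - p) (by omega) (by omega) (by linear_combination -a1)
    have hu' : (n - p' : ℝ) = uu n q := by exact_mod_cast hu
    refine ⟨?_, ?_⟩
    · have : (n : ℝ) * (1 - (uu n q : ℝ) / n) = n - uu n q := by field_simp
      have h3 : (n : ℝ) * (1 - (uu n q : ℝ) / n) < n * α := by linarith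
      exact lt_of_mul_lt_mul_left h3 (by positivity)
    · have : (n : ℝ) * (1 - (uu n q : ℝ) / n + ww n q) = n - uu n q + 1 / (n + q) := by unfold ww; field_simp
      have h3 : n * α < (n : ℝ) * (1 - (uu n q : ℝ) / n + ww n q) := by linarith
      exact lt_of_mul_lt_mul_left h3 (by positivity)

/-- the two intervals together, irrational points only -/
noncomputable def JJ (i : (_ : ℕ) × ℕ) : Set ℝ := (IP i.1 i.2 ∪ IM i.1 i.2) ∩ {x | Irrational x}

noncomputable def SS (a b R : ℝ) : Set ℝ := {α : ℝ | α ∈ Ioo (0 : ℝ) 1 ∧ Irrational α ∧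
          a < (qden (pq α) (nIndex α R) : ℝ) / R ∧
          (qden (pq α) (nIndex α R) : ℝ) / R < b}

lemma idx {a b R : ℝ} (ha : 1 < a) (hR : 1 ≤ R) {n q : ℕ} (hn : n ∈ nset a b R) (hq : q ∈ qset R n) :
    2 ≤ n ∧ 0 < q ∧ q.Coprime n ∧ (q : ℝ) ≤ R ∧ R < n := by
  rw [mem_nset (by linarith) (by linarith)] at hn
  rw [mem_qset (by linarith)] at hq
  have h1 : R < n := by nlinarith [hn.1]
  have h2 : 1 < n := by
    have : (1 : ℝ) < n := by linarith
    exact_mod_cast this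
  refine ⟨h2, ?_, hq.2, hq.1, h1⟩
  rcases Nat.eq_zero_or_pos q with rfl | h
  · have := hq.2
    rw [Nat.coprime_zero_left] at this
    omega
  · exact h

lemma cond_of_JJ {n q : ℕ} (hn : 2 ≤ n) (hq : 0 < q) (hc : q.Coprime n) {α : ℝ} (h : α ∈ IP n q ∪ IM n q) :
    ∃ p' p : ℤ, Cond n q p' p α := by
  rcases h with h | h
  · obtain ⟨p, _, h⟩ := cond_of_IP hn hq hc h
    exact ⟨_, p, h⟩
  · obtain ⟨p, _, h⟩ := cond_of_IM hn hq hc h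
    exact ⟨_, p, h⟩

lemma IP_sub {n q : ℕ} (hn : 2 ≤ n) (hq : 0 < q) (hc : q.Coprime n) :
    0 ≤ (uu n q : ℝ) / n - ww n q ∧ (uu n q : ℝ) / n ≤ 1 ∧ 0 ≤ 1 - (uu n q : ℝ) / n ∧ 1 - (uu n q : ℝ) / n + ww n q ≤ 1 := by
  have h1 := uu_bounds hn hc
  have h2 := ww_lt hn hq
  have h3 : 0 < 1 / (n : ℝ) := by have : 0 < n := by omega
                                  positivity
  refine ⟨?_, ?_, ?_, ?_⟩ <;> linarith

lemma SS_eq {a b R : ℝ} (ha : 1 < a) (hR : 1 ≤ R) :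
    SS a b R = ⋃ i ∈ (nset a b R).sigma (qset R), JJ i := by
  have hR0 : 0 < R := by linarith
  ext α
  simp only [mem_iUnion, exists_prop]
  constructor
  · rintro ⟨h0, hi, h1, h2⟩
    obtain ⟨q, p', p, hq, hqR, hRn, hc⟩ := nIndex_spec h0 hi hR
    set n := qden (pq α) (nIndex α R)
    lift q to ℕ using hq.le
    have hn2 : 2 ≤ n := by
      have : (1 : ℝ) < n := by linarith
      exact_mod_cast this
    obtain ⟨hcop, hm⟩ := mem_of_cond hn2 (by exact_mod_cast hq) h0 hc
    refine ⟨⟨n, q⟩, ?_, hm, hi⟩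
    rw [Finset.mem_sigma]
    rw [lt_div_iff₀ hR0] at h1
    rw [div_lt_iff₀ hR0] at h2
    exact ⟨(mem_nset (by linarith) hR0.le n).2 ⟨h1, h2⟩, (mem_qset hR0.le _ _).2 ⟨by exact_mod_cast hqR, hcop⟩⟩
  · rintro ⟨⟨n, q⟩, hmem, hα, hi⟩
    rw [Finset.mem_sigma] at hmem
    obtain ⟨hn, hq⟩ := hmem
    simp only at hn hq hα
    obtain ⟨i1, i2, i3, i4, i5⟩ := idx ha hR hn hq
    obtain ⟨p', p, hc⟩ := cond_of_JJ i1 i2 i3 hα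
    have h0 : α ∈ Ioo (0 : ℝ) 1 := by
      obtain ⟨b1, b2, b3, b4⟩ := IP_sub i1 i2 i3
      rcases hα with h | h
      · exact ⟨lt_of_le_of_lt b1 h.1, lt_of_lt_of_le h.2 b2⟩
      · exact ⟨lt_of_le_of_lt b3 h.1, lt_of_lt_of_le h.2 b4⟩
    have hi : Irrational α := hi
    obtain ⟨q2, p2', p2, hq2, hqR2, hRn2, hc2⟩ := nIndex_spec h0 hi hR
    have e := (uniq hi hc hc2 (by exact_mod_cast i2) hq2
      (by have : (q : ℝ) < qden (pq α) (nIndex α R) := by linarith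
          exact_mod_cast this)
      (by have : (q2 : ℝ) < n := by linarith
          exact_mod_cast this)
      (by have : (q : ℝ) < n := by linarith
          exact_mod_cast this)
      (by have : (q2 : ℝ) < qden (pq α) (nIndex α R) := by linarith
          exact_mod_cast this)).1
    have e : n = qden (pq α) (nIndex α R) := by exact_mod_cast e
    rw [mem_nset (by linarith) hR0.le] at hn
    refine ⟨h0, hi, ?_, ?_⟩
    · rw [lt_div_iff₀ hR0, ← e]; exact hn.1
    · rw [div_lt_iff₀ hR0, ← e]; exact hn.2

lemma JJ_disj {a b R : ℝ} (ha : 1 < a) (hR : 1 ≤ R) :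
    (((nset a b R).sigma (qset R) : Finset _) : Set ((_ : ℕ) × ℕ)).PairwiseDisjoint JJ := by
  rintro ⟨n, q⟩ hm ⟨n2, q2⟩ hm2 hne
  rw [Finset.mem_coe, Finset.mem_sigma] at hm hm2
  obtain ⟨i1, i2, i3, i4, i5⟩ := idx ha hR hm.1 hm.2
  obtain ⟨k1, k2, k3, k4, k5⟩ := idx ha hR hm2.1 hm2.2
  simp only at i1 i2 i3 i4 i5 k1 k2 k3 k4 k5
  rw [Function.onFun, Set.disjoint_left]
  rintro α ⟨hα, hi⟩ ⟨hα2, -⟩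
  obtain ⟨p', p, hc⟩ := cond_of_JJ i1 i2 i3 hα
  obtain ⟨p2', p2, hc2⟩ := cond_of_JJ k1 k2 k3 hα2
  have hi : Irrational α := hi
  have a1 : q < n2 := by
    have : (q : ℝ) < n2 := by linarith
    exact_mod_cast this
  have a2 : q2 < n := by
    have : (q2 : ℝ) < n := by linarith
    exact_mod_cast this
  have a3 : q < n := by
    have : (q : ℝ) < n := by linarith
    exact_mod_cast this
  have a4 : q2 < n2 := by
    have : (q2 : ℝ) < n2 := by linarith
    exact_mod_cast this
  obtain ⟨e1, e2, -⟩ := uniq hi hc hc2 (by exact_mod_cast i2) (by exact_mod_cast k2) (by exact_mod_cast a1)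
    (by exact_mod_cast a2) (by exact_mod_cast a3) (by exact_mod_cast a4)
  apply hne
  have e1 : n = n2 := by exact_mod_cast e1
  have e2 : q = q2 := by exact_mod_cast e2
  subst e1 e2
  rfl

lemma meas_irr : MeasurableSet {x : ℝ | Irrational x} := by
  have : {x : ℝ | Irrational x} = (range ((↑) : ℚ → ℝ))ᶜ := rfl
  rw [this]
  exact (countable_range _).measurableSet.compl

lemma JJ_meas (i : (_ : ℕ) × ℕ) : MeasurableSet (JJ i) :=
  (measurableSet_Ioo.union measurableSet_Ioo).inter meas_irr

lemma JJ_measure {n q : ℕ} (hn : 2 ≤ n) (hq : 0 < q) (hqn : q < n) (hc : q.Coprime n) :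
    gaussMeasure.real (JJ ⟨n, q⟩) = gaussMeasure.real (IP n q) + gaussMeasure.real (IM n q) := by
  rw [JJ, union_inter_distrib_right, measureReal_union, gauss_irr, gauss_irr]
  · rw [Set.disjoint_left]
    rintro α ⟨h1, hi⟩ ⟨h2, -⟩
    obtain ⟨p, d1, h1⟩ := cond_of_IP hn hq hc h1
    obtain ⟨p2, d2, h2⟩ := cond_of_IM hn hq hc h2
    have hi : Irrational α := hi
    have hqn' : (q : ℤ) < n := by exact_mod_cast hqn
    have hq' : (0 : ℤ) < q := by exact_mod_cast hq
    obtain ⟨-, -, e1, e2⟩ := uniq hi h1 h2 hq' hq' hqn' hqn' hqn' hqn'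
    rw [← e1, ← e2] at d2
    omega
  · exact measurableSet_Ioo.inter meas_irr

lemma IPM_est {n q : ℕ} (hn : 2 ≤ n) (hq : 0 < q) (hc : q.Coprime n) :
    |(gaussMeasure.real (IP n q) + gaussMeasure.real (IM n q)) -
      (Real.log 2)⁻¹ * (ww n q * (1 / (1 + (uu n q : ℝ) / n) + 1 / (1 + (1 - (uu n q : ℝ) / n))))|
      ≤ (Real.log 2)⁻¹ * (2 * ww n q ^ 2) := by
  have hl : 0 < Real.log 2 := Real.log_pos (by norm_num)
  have hw := (ww_pos (q := q) hn).le
  obtain ⟨b1, b2, b3, b4⟩ := IP_sub hn hq hc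
  rw [IP, IM, gauss_Ioo b1 (by linarith) b2, gauss_Ioo b3 (by linarith) b4]
  have e1 := log_est (c := (uu n q : ℝ) / n - ww n q) (d := (uu n q : ℝ) / n) b1 (by linarith) (Or.inr rfl)
  have e2 := log_est (c := 1 - (uu n q : ℝ) / n) (d := 1 - (uu n q : ℝ) / n + ww n q) b3 (by linarith) (Or.inl rfl)
  rw [sub_sub_cancel] at e1
  rw [add_sub_cancel_left] at e2
  rw [← mul_add, ← mul_sub, abs_mul, abs_of_pos (inv_pos.2 hl)]
  gcongr
  rw [abs_le] at *
  constructor <;> linarith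

lemma SS_measure {a b R : ℝ} (ha : 1 < a) (hR : 1 ≤ R) :
    gaussMeasure.real (SS a b R) =
      ∑ n ∈ nset a b R, ∑ q ∈ qset R n, (gaussMeasure.real (IP n q) + gaussMeasure.real (IM n q)) := by
  rw [SS_eq ha hR, measureReal_biUnion_finset (JJ_disj ha hR) (fun i _ => JJ_meas i), Finset.sum_sigma]
  refine Finset.sum_congr rfl fun n hn => Finset.sum_congr rfl fun q hq => ?_
  obtain ⟨i1, i2, i3, i4, i5⟩ := idx ha hR hn hq
  refine JJ_measure i1 i2 ?_ i3
  have : (q : ℝ) < n := by linarith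
  exact_mod_cast this

end Kl


namespace Kl

noncomputable def ff (x : ℝ) : ℝ := 1 / (1 + x) + 1 / (1 + (1 - x))

lemma ff_cont : ContinuousOn ff (Icc 0 1) := by
  unfold ff
  apply ContinuousOn.add
  · apply ContinuousOn.div continuousOn_const (by fun_prop)
    intro x hx
    linarith [hx.1]
  · apply ContinuousOn.div continuousOn_const (by fun_prop)
    intro x hx
    linarith [hx.2]

lemma ff_int : ∫ x in (0 : ℝ)..1, ff x = 2 * Real.log 2 := by
  have hi : IntervalIntegrable ff volume 0 1 := by
    apply ContinuousOn.intervalIntegrable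
    rw [uIcc_of_le zero_le_one]; exact ff_cont
  rw [intervalIntegral.integral_eq_sub_of_hasDerivAt (f := fun x => Real.log (1 + x) - Real.log (1 + (1 - x))) _ hi]
  · norm_num
    ring
  · intro x hx
    rw [uIcc_of_le zero_le_one] at hx
    have h1 : HasDerivAt (fun y : ℝ => 1 + y) 1 x := (hasDerivAt_id x).const_add 1
    have h2 : HasDerivAt (fun y : ℝ => 1 + (1 - y)) (-1) x := ((hasDerivAt_id x).const_sub 1).const_add 1
    have n1 : 1 + x ≠ 0 := by linarith [hx.1]
    have n2 : 1 + (1 - x) ≠ 0 := by linarith [hx.2]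
    refine ((h1.log n1).sub (h2.log n2)).congr_deriv ?_
    unfold ff
    ring

noncomputable def FF : C(UnitAddCircle, ℂ) :=
  ⟨AddCircle.liftIco 1 0 (fun x : ℝ => (ff x : ℂ)), AddCircle.liftIco_zero_continuous (by simp [ff]; ring)
    (Complex.continuous_ofReal.comp_continuousOn ff_cont)⟩

lemma FF_coe {x : ℝ} (hx : x ∈ Ico (0 : ℝ) 1) : FF (x : UnitAddCircle) = ff x :=
  AddCircle.liftIco_zero_coe_apply (f := fun x : ℝ => (ff x : ℂ)) hx

lemma FF_int : ∫ x, FF x ∂AddCircle.haarAddCircle = ((2 * Real.log 2 : ℝ) : ℂ) := by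
  have h : (volume : Measure UnitAddCircle) = AddCircle.haarAddCircle := by
    have := AddCircle.volume_eq_smul_haarAddCircle (T := (1 : ℝ))
    rw [ENNReal.ofReal_one, one_smul] at this
    exact this
  rw [← h, ← UnitAddCircle.intervalIntegral_preimage 0, zero_add, ← ff_int, ← intervalIntegral.integral_ofReal]
  apply intervalIntegral.integral_congr_ae
  have : ∀ᵐ x : ℝ, x ≠ 1 := by simp [ae_iff, measure_singleton]
  filter_upwards [this] with x h1 hx
  rw [uIoc_of_le zero_le_one] at hx
  exact FF_coe ⟨hx.1.le, lt_of_le_of_ne hx.2 h1⟩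

lemma diff_tendsto {a b : ℝ} (ha : 1 < a) (hab : a < b) :
    Tendsto (fun R : ℝ => ((gaussMeasure.real (SS a b R) - 2 * WW a b R : ℝ) : ℂ)) atTop (𝓝 0) := by
  have hl : 0 < Real.log 2 := Real.log_pos (by norm_num)
  have hb : 0 ≤ b := by linarith
  have hLL := (LL_tendsto ha hb FF).const_mul (((Real.log 2)⁻¹ : ℝ) : ℂ)
  rw [mul_zero] at hLL
  set g : ℕ → ℕ → ℂ := fun n q => (((gaussMeasure.real (IP n q) + gaussMeasure.real (IM n q)) / ww n q
    - (Real.log 2)⁻¹ * ff ((uu n q : ℝ) / n) : ℝ) : ℂ) with hg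
  have hE : Tendsto (fun R : ℝ => ∑ n ∈ nset a b R, ∑ q ∈ qset R n, (1 / ((n : ℝ) * (n + q))) • g n q) atTop (𝓝 0) := by
    have h0 : Tendsto (fun R : ℝ => 2 * (b + 1) * ((Real.log 2)⁻¹ * (2 * (1 / R ^ 2)))) atTop (𝓝 0) := by
      have h1 : Tendsto (fun R : ℝ => (R ^ 2)⁻¹) atTop (𝓝 0) := tendsto_inv_atTop_zero.comp (tendsto_pow_atTop (by norm_num))
      have := h1.const_mul (2 * (b + 1) * (Real.log 2)⁻¹ * 2)
      rw [mul_zero] at this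
      refine this.congr fun R => ?_
      ring
    refine squeeze_zero_norm' ?_ h0
    filter_upwards [eventually_ge_atTop 1] with R hR
    refine double_sum_le ha hb hR _ (by positivity) g fun n hn q hq => ?_
    obtain ⟨i1, i2, i3, i4, i5⟩ := idx ha hR hn hq
    have hw := ww_pos (q := q) i1
    have hw2 : ww n q ≤ 1 / R ^ 2 := weight_le ha hR hn q
    have est := IPM_est i1 i2 i3
    simp only [hg]
    rw [Complex.norm_real, Real.norm_eq_abs]
    have e : (gaussMeasure.real (IP n q) + gaussMeasure.real (IM n q)) / ww n q - (Real.log 2)⁻¹ * ff ((uu n q : ℝ) / n)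
        = ((gaussMeasure.real (IP n q) + gaussMeasure.real (IM n q)) - (Real.log 2)⁻¹ * (ww n q * ff ((uu n q : ℝ) / n))) / ww n q := by
      field_simp
    rw [e, abs_div, abs_of_pos hw, div_le_iff₀ hw]
    refine est.trans ?_
    rw [sq]
    have : (Real.log 2)⁻¹ * (2 * (ww n q * ww n q)) = (Real.log 2)⁻¹ * (2 * ww n q) * ww n q := by ring
    rw [this]
    gcongr
  have hsum := hE.add hLL
  rw [add_zero] at hsum
  refine hsum.congr' ?_
  filter_upwards [eventually_ge_atTop 1] with R hR
  rw [SS_measure ha hR, LL, WW, Finset.mul_sum, Finset.mul_sum, ← Finset.sum_add_distrib, ← Finset.sum_sub_distrib,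
    Complex.ofReal_sum]
  refine Finset.sum_congr rfl fun n hn => ?_
  rw [Finset.mul_sum, Finset.mul_sum, ← Finset.sum_add_distrib, ← Finset.sum_sub_distrib, Complex.ofReal_sum]
  refine Finset.sum_congr rfl fun q hq => ?_
  obtain ⟨i1, i2, i3, i4, i5⟩ := idx ha hR hn hq
  have hw := ww_pos (q := q) i1
  have hpt : FF (pt n q) = ff ((uu n q : ℝ) / n) := by
    apply FF_coe
    have h1 := uu_bounds i1 i3
    have h2 : 0 < 1 / (n : ℝ) := by
      have : 0 < n := by omega
      positivity
    constructor
    · exact h2.le.trans h1.1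
    · exact lt_of_le_of_lt h1.2 (by linarith)
  rw [hpt, FF_int]
  simp only [hg, Complex.real_smul]
  rw [← Complex.ofReal_sub, ← Complex.ofReal_mul, ← Complex.ofReal_mul, ← Complex.ofReal_mul, ← Complex.ofReal_add]
  congr 1
  change ww n q * _ + (Real.log 2)⁻¹ * (ww n q * _) = _ - 2 * ww n q
  field_simp
  ring

lemma final {a b : ℝ} (ha : 1 < a) (hab : a < b) :
    Tendsto (fun R : ℝ => gaussMeasure.real (SS a b R)) atTop
      (𝓝 ((∫ p, roof p ∂mu2)⁻¹ *
        ∫ p, (max 0 (roof p - Real.log a) - max 0 (roof p - Real.log b)) ∂mu2)) := by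
  rw [rhs_eq ha hab]
  have h1 : Tendsto (fun R : ℝ => gaussMeasure.real (SS a b R) - 2 * WW a b R) atTop (𝓝 0) := by
    have := (Complex.continuous_re.tendsto 0).comp (diff_tendsto ha hab)
    simp only [Complex.zero_re] at this
    refine this.congr fun R => ?_
    simp only [Function.comp, Complex.ofReal_re]
  have := h1.add ((WW_tendsto ha hab).const_mul 2)
  rw [zero_add] at this
  refine this.congr fun R => ?_
  ring

end Kl

/-- For all `1 < a < b`, the Gauss measure of
`{α ∈ (0,1) irrational : a < q_{n_R}(α)/R < b}` converges, as `R → ∞`, to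
`(∫_D φ dμ₂)⁻¹ · ∫_D (max 0 (φ − ln a) − max 0 (φ − ln b)) dμ₂`. -/
theorem statement1 (a b : ℝ) (ha : 1 < a) (hab : a < b) :
    Filter.Tendsto
      (fun R : ℝ =>
        (gaussMeasure {α : ℝ | α ∈ Ioo (0 : ℝ) 1 ∧ Irrational α ∧
          a < (qden (pq α) (nIndex α R) : ℝ) / R ∧
          (qden (pq α) (nIndex α R) : ℝ) / R < b}).toReal)
      Filter.atTop
      (nhds ((∫ p, roof p ∂mu2)⁻¹ *
        ∫ p, (max 0 (roof p - Real.log a) - max 0 (roof p - Real.log b)) ∂mu2)) := by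
  exact Kl.final ha hab
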